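/- Assume omega_1, omega_2 : (0,1) -> C are differentiable, with omega_1(t), omega_2(t) R-linearly independent for every t, and that g_2(t) and g_3(t) are algebraic over C(t). Let a : (0,1) -> C be differentiable with a(t) not in Lambda(t) for all t, such that t -> wp(a(t),t) is algebraic over C(t) and t -> (d wp/d omega)(a(t),t) is not identically zero. Then the functions t -> a(t) and t -> zeta_{Lambda(t)}(a(t)) are D-finite: each satisfies a non-trivial linear differential equation in t with coefficients in C(t). -/

import Mathlib

open scoped BigOperators

namespace WeierstrassElliptic

/-- The lattice `ℤω₁ + ℤω₂ ⊆ ℂ`. -/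
def latticeSet (ω₁ ω₂ : ℂ) : Set ℂ :=
  {z | ∃ m n : ℤ, z = (m : ℂ) * ω₁ + (n : ℂ) * ω₂}

/-- The point of the lattice indexed by `p ∈ ℤ × ℤ`. -/
def latPt (ω₁ ω₂ : ℂ) (p : ℤ × ℤ) : ℂ := (p.1 : ℂ) * ω₁ + (p.2 : ℂ) * ω₂

/-- The Weierstrass `℘`-function of the lattice `ℤω₁ + ℤω₂`:
`℘(z) = z⁻² + ∑_{λ ∈ Λ, λ ≠ 0} ((z+λ)⁻² - λ⁻²)`. -/
noncomputable def wp (ω₁ ω₂ : ℂ) (z : ℂ) : ℂ :=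
  (z ^ 2)⁻¹ + ∑' p : ℤ × ℤ,
    if p = 0 then 0
    else ((z + latPt ω₁ ω₂ p) ^ 2)⁻¹ - ((latPt ω₁ ω₂ p) ^ 2)⁻¹

/-- The invariant `g₂ = 60 ∑_{λ ∈ Λ, λ ≠ 0} λ⁻⁴`. -/
noncomputable def g2 (ω₁ ω₂ : ℂ) : ℂ :=
  60 * ∑' p : ℤ × ℤ, if p = 0 then 0 else ((latPt ω₁ ω₂ p) ^ 4)⁻¹

/-- The invariant `g₃ = 140 ∑_{λ ∈ Λ, λ ≠ 0} λ⁻⁶`. -/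
noncomputable def g3 (ω₁ ω₂ : ℂ) : ℂ :=
  140 * ∑' p : ℤ × ℤ, if p = 0 then 0 else ((latPt ω₁ ω₂ p) ^ 6)⁻¹

/-- The Weierstrass `ζ`-function:
`ζ(z) = z⁻¹ + ∑_{λ ∈ Λ, λ ≠ 0} ((z-λ)⁻¹ + λ⁻¹ + z λ⁻²)`. -/
noncomputable def wzeta (ω₁ ω₂ : ℂ) (z : ℂ) : ℂ :=
  z⁻¹ + ∑' p : ℤ × ℤ,
    if p = 0 then 0
    else (z - latPt ω₁ ω₂ p)⁻¹ + (latPt ω₁ ω₂ p)⁻¹ + z * ((latPt ω₁ ω₂ p) ^ 2)⁻¹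

/-- A function `c : (0,1) → ℂ` (defined on all of `ℝ`, but only its restriction to `(0,1)`
matters) is algebraic over `ℂ(t)` if there is a nonzero polynomial `P ∈ ℂ[T,Z]` with
`P(t, c(t)) = 0` for all `t ∈ (0,1)`.  Here `T = X 0` and `Z = X 1`. -/
def AlgebraicOverCt (c : ℝ → ℂ) : Prop :=
  ∃ P : MvPolynomial (Fin 2) ℂ, P ≠ 0 ∧
    ∀ t ∈ Set.Ioo (0 : ℝ) 1, MvPolynomial.eval ![(t : ℂ), c t] P = 0

/-- Membership in the set `X`: `b : (0,1) → ℂ` is such that for every `t`, either `b(t)`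
lies in the lattice `Λ(t)` (a pole of `℘`), or `t ↦ ℘(b(t),t)` is algebraic over `ℂ(t)`. -/
def MemX (ω₁ ω₂ b : ℝ → ℂ) : Prop :=
  ∀ t ∈ Set.Ioo (0 : ℝ) 1,
    b t ∈ latticeSet (ω₁ t) (ω₂ t) ∨
      AlgebraicOverCt (fun s => wp (ω₁ s) (ω₂ s) (b s))

end WeierstrassElliptic

namespace WeierstrassElliptic

/-- A function `g : (0,1) → ℂ` is D-finite (over `ℂ(t)`) if it satisfies a non-trivial
linear differential equation in `t` with polynomial coefficients, on `(0,1)`. -/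
def DFiniteT (g : ℝ → ℂ) : Prop :=
  ∃ (m : ℕ) (c : Fin (m + 1) → Polynomial ℂ), (∃ i, c i ≠ 0) ∧
    ∀ t ∈ Set.Ioo (0 : ℝ) 1,
      ∑ i : Fin (m + 1), (c i).eval (t : ℂ) * iteratedDeriv (i : ℕ) g t = 0


section GermPart
open Filter Topology

/-- The filter of cofinite subsets of `(0,1)`. -/
abbrev lfil : Filter ℝ := cofinite ⊓ 𝓟 (Set.Ioo (0:ℝ) 1)

abbrev FG : Type := Germ lfil ℂ

abbrev KK : Type := RatFunc ℂ

lemma ev_iff {p : ℝ → Prop} :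
    (∀ᶠ t in lfil, p t) ↔ {t | t ∈ Set.Ioo (0:ℝ) 1 ∧ ¬ p t}.Finite := by
  rw [lfil, eventually_inf_principal, eventually_cofinite]
  simp only [Classical.not_imp]

lemma ev_of_forall {p : ℝ → Prop} (h : ∀ t ∈ Set.Ioo (0:ℝ) 1, p t) : ∀ᶠ t in lfil, p t := by
  rw [lfil, eventually_inf_principal]
  exact Eventually.of_forall h

lemma ev_nhds {p : ℝ → Prop} (h : ∀ᶠ t in lfil, p t) :
    ∀ᶠ t in lfil, ∀ᶠ s in 𝓝 t, p s := by
  have hf := ev_iff.1 h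
  rw [lfil, eventually_inf_principal]
  filter_upwards [hf.compl_mem_cofinite] with t ht hI
  have h1 : {t | t ∈ Set.Ioo (0:ℝ) 1 ∧ ¬ p t}ᶜ ∈ 𝓝 t := hf.isClosed.isOpen_compl.mem_nhds ht
  filter_upwards [h1, isOpen_Ioo.mem_nhds hI] with s hs hsI
  by_contra hp
  exact hs ⟨hsI, hp⟩

noncomputable def polyGerm : Polynomial ℂ →+* FG :=
  (Germ.coeRingHom lfil).comp (RingHom.pi fun t : ℝ => Polynomial.evalRingHom (t:ℂ))

lemma polyGerm_apply (p : Polynomial ℂ) :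
    polyGerm p = ((fun t : ℝ => p.eval (t:ℂ) : ℝ → ℂ) : FG) := rfl

lemma poly_ev_ne {p : Polynomial ℂ} (hp : p ≠ 0) : ∀ᶠ t : ℝ in lfil, p.eval (t:ℂ) ≠ 0 := by
  rw [ev_iff]
  have : {t : ℝ | p.eval (t:ℂ) = 0}.Finite := by
    have h := (Polynomial.finite_setOfPred_isRoot hp)
    exact h.preimage (Complex.ofReal_injective.injOn)
  refine this.subset ?_
  rintro t ⟨-, ht⟩
  simpa using ht

lemma germ_isUnit {f : ℝ → ℂ} (h : ∀ᶠ t in lfil, f t ≠ 0) : IsUnit (f : FG) := by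
  refine IsUnit.of_mul_eq_one ((fun t => (f t)⁻¹ : ℝ → ℂ) : FG) ?_
  rw [← Germ.coe_mul, ← Germ.coe_one, Germ.coe_eq]
  filter_upwards [h] with t ht
  simp [ht]

lemma polyGerm_isUnit (y : nonZeroDivisors (Polynomial ℂ)) : IsUnit (polyGerm y) := by
  rw [polyGerm_apply]
  exact germ_isUnit (poly_ev_ne (nonZeroDivisors.coe_ne_zero y))

noncomputable def kGerm : KK →+* FG := IsLocalization.lift (M := nonZeroDivisors (Polynomial ℂ)) polyGerm_isUnit

noncomputable instance algKF : Algebra KK FG := kGerm.toAlgebra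

lemma algMap_poly (p : Polynomial ℂ) :
    algebraMap KK FG (algebraMap (Polynomial ℂ) KK p) = polyGerm p := by
  change kGerm _ = _
  exact IsLocalization.lift_eq _ _

/-- derivative relation on germs -/
def DD (F G : FG) : Prop := ∃ f g : ℝ → ℂ, F = (f : FG) ∧ G = (g : FG) ∧
  ∀ᶠ t in lfil, HasDerivAt f (g t) t

lemma DD_rep {F G : FG} (h : DD F G) {f g : ℝ → ℂ} (hf : F = (f : FG)) (hg : G = (g : FG)) :
    ∀ᶠ t in lfil, HasDerivAt f (g t) t := by
  obtain ⟨f', g', hf', hg', hd⟩ := h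
  have h1 : (f : ℝ → ℂ) =ᶠ[lfil] f' := Germ.coe_eq.1 (hf ▸ hf')
  have h2 : (g : ℝ → ℂ) =ᶠ[lfil] g' := Germ.coe_eq.1 (hg ▸ hg')
  filter_upwards [ev_nhds h1, h2, hd] with t ht1 ht2 htd
  rw [ht2]
  exact htd.congr_of_eventuallyEq ht1

lemma DD_unique {F G G' : FG} (h : DD F G) (h' : DD F G') : G = G' := by
  obtain ⟨f, g, rfl, rfl, hd⟩ := h
  induction G' using Germ.inductionOn with
  | _ g' =>
  have := DD_rep h' rfl rfl
  rw [Germ.coe_eq]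
  filter_upwards [hd, this] with t h1 h2
  exact h1.unique h2

lemma DD_add {F G F' G' : FG} (h : DD F F') (h' : DD G G') : DD (F + G) (F' + G') := by
  obtain ⟨f, f', rfl, rfl, hd⟩ := h
  obtain ⟨g, g', rfl, rfl, hd'⟩ := h'
  refine ⟨f + g, f' + g', rfl, rfl, ?_⟩
  filter_upwards [hd, hd'] with t h1 h2
  exact h1.add h2

lemma DD_mul {F G F' G' : FG} (h : DD F F') (h' : DD G G') : DD (F * G) (F' * G + F * G') := by
  obtain ⟨f, f', rfl, rfl, hd⟩ := h
  obtain ⟨g, g', rfl, rfl, hd'⟩ := h'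
  refine ⟨f * g, f' * g + f * g', rfl, rfl, ?_⟩
  filter_upwards [hd, hd'] with t h1 h2
  exact h1.mul h2

lemma DD_poly (p : Polynomial ℂ) : DD (polyGerm p) (polyGerm p.derivative) := by
  refine ⟨_, _, polyGerm_apply _, polyGerm_apply _, Eventually.of_forall fun t => ?_⟩
  exact (p.hasDerivAt (t:ℂ)).comp_ofReal

lemma DD_zero : DD 0 0 := by
  have := DD_poly 0
  simpa using this

lemma DD_K (k : KK) : ∃ k' : KK, DD (algebraMap KK FG k) (algebraMap KK FG k') := by
  obtain ⟨p, q, rfl⟩ := IsLocalization.exists_mk'_eq (nonZeroDivisors (Polynomial ℂ)) k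
  set k : KK := IsLocalization.mk' KK p q with hk
  have hq : (q : Polynomial ℂ) ≠ 0 := nonZeroDivisors.coe_ne_zero q
  have hqK : algebraMap (Polynomial ℂ) KK q ≠ 0 := by
    simpa using hq
  have hkq : k * algebraMap (Polynomial ℂ) KK q = algebraMap _ KK p :=
    IsLocalization.mk'_spec _ _ _
  have hkF : algebraMap KK FG k * polyGerm q = polyGerm p := by
    rw [← algMap_poly, ← algMap_poly, ← map_mul, hkq]
  refine ⟨(algebraMap _ KK (Polynomial.derivative p) - k * algebraMap _ KK (Polynomial.derivative (q : Polynomial ℂ))) * (algebraMap _ KK (q : Polynomial ℂ))⁻¹, ?_⟩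
  -- representative
  have hrep : algebraMap KK FG k = ((fun t : ℝ => p.eval (t:ℂ) / (q : Polynomial ℂ).eval (t:ℂ) : ℝ → ℂ) : FG) := by
    apply (polyGerm_isUnit q).mul_right_cancel
    rw [hkF, polyGerm_apply, polyGerm_apply, ← Germ.coe_mul, Germ.coe_eq]
    filter_upwards [poly_ev_ne hq] with t ht
    simp [ht]
  refine ⟨_, fun t : ℝ => ((Polynomial.derivative p).eval (t:ℂ) * (q : Polynomial ℂ).eval (t:ℂ) - p.eval (t:ℂ) * (Polynomial.derivative (q : Polynomial ℂ)).eval (t:ℂ)) / (q : Polynomial ℂ).eval (t:ℂ) ^ 2, hrep, ?_, ?_⟩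
  · apply (polyGerm_isUnit q).mul_right_cancel
    have : algebraMap KK FG (((algebraMap _ KK (Polynomial.derivative p) - k * algebraMap _ KK (Polynomial.derivative (q : Polynomial ℂ))) * (algebraMap _ KK (q : Polynomial ℂ))⁻¹)) * polyGerm q = polyGerm (Polynomial.derivative p) - algebraMap KK FG k * polyGerm (Polynomial.derivative (q : Polynomial ℂ)) := by
      rw [← algMap_poly, ← map_mul, mul_assoc, inv_mul_cancel₀ hqK, mul_one, map_sub, map_mul, algMap_poly, algMap_poly]
    rw [this, hrep, polyGerm_apply, polyGerm_apply, polyGerm_apply, ← Germ.coe_mul, ← Germ.coe_mul, ← Germ.coe_sub, Germ.coe_eq]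
    filter_upwards [poly_ev_ne hq] with t ht
    simp only [Pi.sub_apply, Pi.mul_apply]
    field_simp
  · filter_upwards [poly_ev_ne hq] with t ht
    exact ((p.hasDerivAt (t:ℂ)).comp_ofReal).div (((q : Polynomial ℂ).hasDerivAt (t:ℂ)).comp_ofReal) ht

lemma DD_smulK (k : KK) {F F' : FG} (h : DD F F') :
    ∃ k' : KK, DD (k • F) (k' • F + k • F') := by
  obtain ⟨k', hk'⟩ := DD_K k
  refine ⟨k', ?_⟩
  rw [Algebra.smul_def, Algebra.smul_def, Algebra.smul_def]
  exact DD_mul hk' h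

lemma germ_sq_eq_zero {F : FG} (h : F * F = 0) : F = 0 := by
  induction F using Germ.inductionOn with
  | _ f =>
  rw [← Germ.coe_mul, ← Germ.coe_zero, Germ.coe_eq] at h
  rw [← Germ.coe_zero, Germ.coe_eq]
  filter_upwards [h] with t ht
  simpa using ht

lemma DD_aeval {F F' : FG} (h : DD F F') (p : Polynomial KK) :
    ∃ e ∈ Algebra.adjoin KK {F}, DD (Polynomial.aeval F p)
      (e + Polynomial.aeval F (Polynomial.derivative p) * F') := by
  have hF : F ∈ Algebra.adjoin KK {F} := Algebra.self_mem_adjoin_singleton KK F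
  induction p using Polynomial.induction_on' with
  | add p q hp hq =>
    obtain ⟨e, he, hd⟩ := hp
    obtain ⟨e', he', hd'⟩ := hq
    refine ⟨e + e', add_mem he he', ?_⟩
    have := DD_add hd hd'
    simp only [map_add]
    convert this using 1
    ring
  | monomial n k =>
    induction n with
    | zero =>
      obtain ⟨k', hk'⟩ := DD_K k
      refine ⟨algebraMap KK FG k', Subalgebra.algebraMap_mem _ _, ?_⟩
      simpa using hk'
    | succ n ih =>
      obtain ⟨e, he, hd⟩ := ih
      refine ⟨e * F, mul_mem he hF, ?_⟩
      have := DD_mul hd h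
      have e1 : Polynomial.monomial (n+1) k = Polynomial.monomial n k * Polynomial.X := by
        rw [Polynomial.monomial_mul_X]
      rw [e1, Polynomial.derivative_mul, map_mul, map_add, map_mul, map_mul]
      simp only [Polynomial.derivative_X, Polynomial.aeval_X, map_one, mul_one]
      convert this using 1
      ring

lemma minpoly_sep {F : FG} (h : IsIntegral KK F) : (minpoly KK F).Separable := by
  rw [PerfectField.separable_iff_squarefree]
  intro q hq
  obtain ⟨r, hr⟩ := hq
  have h0 : Polynomial.aeval F (q * r) = 0 := by
    apply germ_sq_eq_zero
    rw [← map_mul]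
    have : q * r * (q * r) = minpoly KK F * r := by rw [hr]; ring
    rw [this, map_mul, minpoly.aeval, zero_mul]
  have hd := minpoly.dvd KK F h0
  obtain ⟨s, hs⟩ := hd
  have hne := minpoly.ne_zero h
  have hqr : q * r ≠ 0 := by
    intro h1
    apply hne
    rw [hr, mul_assoc, h1, mul_zero]
  refine IsUnit.of_mul_eq_one s ?_
  apply mul_left_cancel₀ hqr
  rw [mul_one]
  conv_rhs => rw [hs, hr]
  ring

lemma DD_alg {F F' : FG} (hF : IsIntegral KK F) (h : DD F F') :
    F' ∈ Algebra.adjoin KK {F} := by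
  obtain ⟨u, v, huv⟩ := minpoly_sep hF
  obtain ⟨e, he, hd⟩ := DD_aeval h (minpoly KK F)
  rw [minpoly.aeval] at hd
  have h0 := DD_unique hd DD_zero
  have h1 := congrArg (Polynomial.aeval F) huv
  simp only [map_add, map_mul, minpoly.aeval, mul_zero, zero_add, map_one] at h1
  have : F' = - (Polynomial.aeval F v * e) := by
    linear_combination (-F') * h1 + Polynomial.aeval F v * h0
  rw [this]
  exact neg_mem (mul_mem (Polynomial.aeval_mem_adjoin_singleton _ _) he)

lemma adjoin_closed {S : Set FG} (hS : ∀ F ∈ S, IsIntegral KK F ∧ ∃ F', DD F F') {F : FG}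
    (hF : F ∈ Algebra.adjoin KK S) : ∃ F' ∈ Algebra.adjoin KK S, DD F F' := by
  induction hF using Algebra.adjoin_induction with
  | mem F hF =>
    obtain ⟨h1, F', h2⟩ := hS F hF
    exact ⟨F', Algebra.adjoin_mono (Set.singleton_subset_iff.2 hF) (DD_alg h1 h2), h2⟩
  | algebraMap k =>
    obtain ⟨k', hk⟩ := DD_K k
    exact ⟨_, Subalgebra.algebraMap_mem _ _, hk⟩
  | add F G _ _ h1 h2 =>
    obtain ⟨F', h1, h1'⟩ := h1
    obtain ⟨G', h2, h2'⟩ := h2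
    exact ⟨_, add_mem h1 h2, DD_add h1' h2'⟩
  | mul F G hF hG h1 h2 =>
    obtain ⟨F', h1, h1'⟩ := h1
    obtain ⟨G', h2, h2'⟩ := h2
    exact ⟨_, add_mem (mul_mem h1 hG) (mul_mem hF h2), DD_mul h1' h2'⟩

lemma iter_rep {w : ℕ → ℝ → ℂ} (hw : ∀ k, ∀ᶠ t in lfil, HasDerivAt (w k) (w (k+1) t) t) (k : ℕ) :
    ∀ᶠ t in lfil, iteratedDeriv k (w 0) t = w k t := by
  induction k with
  | zero => exact Eventually.of_forall fun t => by simp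
  | succ k ih =>
    filter_upwards [ev_nhds ih, hw k] with t h1 h2
    rw [iteratedDeriv_succ]
    rw [EventuallyEq.deriv_eq (f := w k) h1, h2.deriv]

lemma dfinite_of_sub (W : Submodule KK FG) [Module.Finite KK W]
    (hW : ∀ F ∈ W, ∃ F' ∈ W, DD F F') {f : ℝ → ℂ} (hf : (f : FG) ∈ W) : DFiniteT f := by
  classical
  choose d hdW hd using hW
  let w : ℕ → W := fun k => Nat.rec ⟨(f : FG), hf⟩ (fun _ F => ⟨d F.1 F.2, hdW F.1 F.2⟩) k
  have hw : ∀ k, DD (w k).1 (w (k+1)).1 := fun k => hd _ (w k).2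
  have hrep : ∀ k, ∃ r : ℝ → ℂ, (w k).1 = (r : FG) ∧ (k = 0 → r = f) := by
    intro k
    rcases Nat.eq_zero_or_pos k with rfl | hk
    · exact ⟨f, rfl, fun _ => rfl⟩
    · generalize (w k).1 = F
      induction F using Germ.inductionOn with
      | _ r => exact ⟨r, rfl, fun h => by omega⟩
  choose r hr hr0 using hrep
  have hrd : ∀ k, ∀ᶠ t in lfil, HasDerivAt (r k) (r (k+1) t) t :=
    fun k => DD_rep (hw k) (hr k) (hr (k+1))
  have hit := iter_rep hrd
  rw [hr0 0 rfl] at hit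
  let m := Module.finrank KK W
  have hdep : ¬ LinearIndependent KK (fun i : Fin (m+1) => w i) := by
    intro h
    have := h.fintype_card_le_finrank
    simp [m] at this
  rw [Fintype.not_linearIndependent_iff] at hdep
  obtain ⟨g, hg, i0, hi0⟩ := hdep
  obtain ⟨b, hb⟩ := IsLocalization.exist_integer_multiples_of_finset (nonZeroDivisors (Polynomial ℂ)) (Finset.univ.image g)
  have hb' : ∀ i, ∃ c : Polynomial ℂ, algebraMap _ KK c = algebraMap _ KK (b : Polynomial ℂ) * g i := by
    intro i
    obtain ⟨c, hc⟩ := hb (g i) (by simp)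
    exact ⟨c, by rw [hc, Algebra.smul_def]⟩
  choose c hc using hb'
  have hbne : (b : Polynomial ℂ) ≠ 0 := nonZeroDivisors.coe_ne_zero b
  have hbK : algebraMap (Polynomial ℂ) KK b ≠ 0 := by simpa using hbne
  have hci0 : c i0 ≠ 0 := by
    intro h
    have := hc i0
    rw [h, map_zero] at this
    exact (mul_ne_zero hbK hi0) this.symm
  have hsum : ∑ i : Fin (m+1), polyGerm (c i) * ((r i : ℝ → ℂ) : FG) = 0 := by
    have h1 := congrArg (fun x : W => algebraMap (Polynomial ℂ) KK b • x.1) hg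
    simp only [Submodule.coe_sum, Submodule.coe_smul, Finset.smul_sum, smul_smul, ← hc, Submodule.coe_zero, smul_zero] at h1
    rw [← h1]
    refine Finset.sum_congr rfl fun i _ => ?_
    rw [hr, Algebra.smul_def, algMap_poly]
  have hsum' : ∀ᶠ t : ℝ in lfil, ∑ i : Fin (m+1), (c i).eval (t:ℂ) * r i t = 0 := by
    have : (((fun t : ℝ => ∑ i : Fin (m+1), (c i).eval (t:ℂ) * r i t) : ℝ → ℂ) : FG) = ((fun _ => 0 : ℝ → ℂ) : FG) := by
      change _ = (0 : FG)
      rw [← hsum]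
      have e : (fun t : ℝ => ∑ i : Fin (m+1), (c i).eval (t:ℂ) * r i t) = ∑ i : Fin (m+1), (fun t : ℝ => (c i).eval (t:ℂ)) * r i := by
        ext t; simp
      rw [e]
      exact map_sum (Germ.coeRingHom lfil) _ _
    exact Germ.coe_eq.1 this
  have hall : ∀ᶠ t : ℝ in lfil, ∑ i : Fin (m+1), (c i).eval (t:ℂ) * iteratedDeriv i f t = 0 := by
    have : ∀ᶠ t : ℝ in lfil, ∀ i : Fin (m+1), iteratedDeriv i f t = r i t :=
      eventually_all.2 fun i => hit i
    filter_upwards [hsum', this] with t h1 h2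
    rw [← h1]
    refine Finset.sum_congr rfl fun i _ => by rw [h2]
  have hfin := ev_iff.1 hall
  let R : Polynomial ℂ := ∏ t ∈ hfin.toFinset, (Polynomial.X - Polynomial.C (t:ℂ))
  have hR : R ≠ 0 := Finset.prod_ne_zero_iff.2 fun t _ => Polynomial.X_sub_C_ne_zero _
  refine ⟨m, fun i => R * c i, ⟨i0, mul_ne_zero hR hci0⟩, fun t ht => ?_⟩
  simp only [Polynomial.eval_mul, mul_assoc]
  rw [← Finset.mul_sum]
  by_cases h : ∑ i : Fin (m+1), (c i).eval (t:ℂ) * iteratedDeriv i f t = 0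
  · rw [h, mul_zero]
  · have : R.eval (t:ℂ) = 0 := by
      rw [Polynomial.eval_prod]
      exact Finset.prod_eq_zero (i := t) (by simpa using ⟨ht, h⟩) (by simp)
    rw [this, zero_mul]

lemma dfinite_system {S : Set FG} (hSf : S.Finite)
    (hS : ∀ F ∈ S, IsIntegral KK F ∧ ∃ F', DD F F') (a Z : ℝ → ℂ)
    {p q r p' q' r' : FG}
    (hp : p ∈ Algebra.adjoin KK S) (hq : q ∈ Algebra.adjoin KK S) (hr : r ∈ Algebra.adjoin KK S)
    (hp' : p' ∈ Algebra.adjoin KK S) (hq' : q' ∈ Algebra.adjoin KK S)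
    (hr' : r' ∈ Algebra.adjoin KK S)
    (ha : DD a (p + q * a + r * Z)) (hZ : DD Z (p' + q' * a + r' * Z)) :
    DFiniteT a ∧ DFiniteT Z := by
  let A := Algebra.adjoin KK S
  have hfg : (Subalgebra.toSubmodule A).FG :=
    fg_adjoin_of_finite hSf fun F hF => (hS F hF).1
  have : Module.Finite KK A := Module.Finite.iff_fg.2 hfg
  let φ : (A × A × A) →ₗ[KK] FG :=
    (A.val.toLinearMap).coprod
      (((LinearMap.mulRight KK (a : FG)).comp A.val.toLinearMap).coprod
       ((LinearMap.mulRight KK (Z : FG)).comp A.val.toLinearMap))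
  have hφ : ∀ u, φ u = u.1.1 + (u.2.1.1 * (a : FG) + u.2.2.1 * (Z : FG)) := fun u => rfl
  let W := LinearMap.range φ
  have hWf : Module.Finite KK W := Module.Finite.range φ
  have hW : ∀ F ∈ W, ∃ F' ∈ W, DD F F' := by
    rintro _ ⟨⟨u, v, w⟩, rfl⟩
    obtain ⟨u', hu', du⟩ := adjoin_closed hS u.2
    obtain ⟨v', hv', dv⟩ := adjoin_closed hS v.2
    obtain ⟨w', hw', dw⟩ := adjoin_closed hS w.2
    refine ⟨_, ?_, by rw [hφ]; exact DD_add du (DD_add (DD_mul dv ha) (DD_mul dw hZ))⟩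
    refine ⟨⟨⟨u' + v * p + w * p', ?_⟩, ⟨v' + v * q + w * q', ?_⟩, ⟨w' + v * r + w * r', ?_⟩⟩, ?_⟩
    · exact add_mem (add_mem hu' (mul_mem v.2 hp)) (mul_mem w.2 hp')
    · exact add_mem (add_mem hv' (mul_mem v.2 hq)) (mul_mem w.2 hq')
    · exact add_mem (add_mem hw' (mul_mem v.2 hr)) (mul_mem w.2 hr')
    · rw [hφ]
      simp only
      ring
  refine ⟨dfinite_of_sub W hW ⟨⟨0, 1, 0⟩, ?_⟩, dfinite_of_sub W hW ⟨⟨0, 0, 1⟩, ?_⟩⟩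
  · rw [hφ]; simp
  · rw [hφ]; simp

lemma alg_integral {c : ℝ → ℂ} (h : AlgebraicOverCt c) : IsIntegral KK (c : FG) := by
  obtain ⟨P, hP, hc⟩ := h
  let φ : MvPolynomial (Fin 2) ℂ →ₐ[ℂ] Polynomial (Polynomial ℂ) :=
    MvPolynomial.aeval ![Polynomial.C Polynomial.X, Polynomial.X]
  let ψ : Polynomial (Polynomial ℂ) →+* MvPolynomial (Fin 2) ℂ :=
    Polynomial.eval₂RingHom (Polynomial.eval₂RingHom MvPolynomial.C (MvPolynomial.X 0)) (MvPolynomial.X 1)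
  have hψφ : ψ.comp φ.toRingHom = RingHom.id _ := by
    apply MvPolynomial.ringHom_ext
    · intro r
      simp [φ, ψ, Polynomial.algebraMap_apply]
    · intro i
      fin_cases i <;> simp [φ, ψ]
  have hφP : φ P ≠ 0 := by
    intro h0
    apply hP
    have := congrArg (fun f : MvPolynomial (Fin 2) ℂ →+* MvPolynomial (Fin 2) ℂ => f P) hψφ
    simp only [RingHom.comp_apply, RingHom.id_apply] at this
    rw [← this]
    change ψ (φ P) = 0
    rw [h0, map_zero]
  let Q : Polynomial KK := (φ P).map (algebraMap (Polynomial ℂ) KK)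
  have hQ : Q ≠ 0 := by
    intro h0
    apply hφP
    exact (Polynomial.map_eq_zero_iff (IsFractionRing.injective (Polynomial ℂ) KK)).1 h0
  rw [← isAlgebraic_iff_isIntegral]
  refine ⟨Q, hQ, ?_⟩
  have h1 : Polynomial.aeval (c : FG) Q = Polynomial.eval₂ polyGerm (c : FG) (φ P) := by
    simp only [Q, Polynomial.aeval_def, Polynomial.eval₂_map]
    congr 1
    exact RingHom.ext fun x => algMap_poly x
  rw [h1]
  have h2 : (Polynomial.eval₂RingHom polyGerm (c : FG)).comp φ.toRingHom =
      (Germ.coeRingHom lfil).comp (RingHom.pi fun t : ℝ => MvPolynomial.eval ![(t:ℂ), c t]) := by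
    apply MvPolynomial.ringHom_ext
    · intro z
      simp only [φ, RingHom.comp_apply, AlgHom.toRingHom_eq_coe, RingHom.coe_coe,
        MvPolynomial.aeval_C, Polynomial.algebraMap_apply, Polynomial.coe_eval₂RingHom, Polynomial.eval₂_C]
      rw [polyGerm_apply]
      change _ = (((fun t => MvPolynomial.eval ![(t:ℂ), c t] (MvPolynomial.C z) : ℝ → ℂ)) : FG)
      simp
    · intro i
      fin_cases i
      · change Polynomial.eval₂ polyGerm (c : FG) (φ (MvPolynomial.X 0)) =
          (((fun t => MvPolynomial.eval ![(t:ℂ), c t] (MvPolynomial.X 0) : ℝ → ℂ)) : FG)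
        simp [φ, polyGerm_apply]
      · change Polynomial.eval₂ polyGerm (c : FG) (φ (MvPolynomial.X 1)) =
          (((fun t => MvPolynomial.eval ![(t:ℂ), c t] (MvPolynomial.X 1) : ℝ → ℂ)) : FG)
        simp [φ]
  have h3 := congrArg (fun f : MvPolynomial (Fin 2) ℂ →+* FG => f P) h2
  change Polynomial.eval₂ polyGerm (c : FG) (φ P) = (((fun t => MvPolynomial.eval ![(t:ℂ), c t] P : ℝ → ℂ)) : FG) at h3
  rw [h3, ← Germ.coe_zero, Germ.coe_eq]
  exact ev_of_forall fun t ht => hc t ht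

end GermPart

section DiscPart
open Filter Topology PeriodPair

lemma Om_open (L : PeriodPair) : IsOpen ((L.lattice : Set ℂ)ᶜ) := L.isClosed_lattice.isOpen_compl

lemma Om_conn (L : PeriodPair) : IsPreconnected ((L.lattice : Set ℂ)ᶜ) := by
  have hc : (L.lattice : Set ℂ).Countable := by
    have : Countable L.lattice := L.latticeEquivProd.toEquiv.countable_iff.2 inferInstance
    exact Set.countable_coe_iff.1 this
  exact (hc.isPathConnected_compl_of_one_lt_rank (by simp)).isConnected.isPreconnected

lemma Om_analytic (L : PeriodPair) {A A' : ℂ → ℂ} (hA : ∀ z ∉ L.lattice, HasDerivAt A (A' z) z) :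
    AnalyticOnNhd ℂ A ((L.lattice : Set ℂ)ᶜ) :=
  DifferentiableOn.analyticOnNhd
    (fun z hz => (hA z hz).differentiableAt.differentiableWithinAt) (Om_open L)

lemma prop_of_wronskian (L : PeriodPair) {A A' B B' : ℂ → ℂ}
    (hA : ∀ z ∉ L.lattice, HasDerivAt A (A' z) z) (hB : ∀ z ∉ L.lattice, HasDerivAt B (B' z) z)
    (hW : ∀ z ∉ L.lattice, A' z * B z = A z * B' z) {z₀ : ℂ} (hz₀ : z₀ ∉ L.lattice)
    (h0 : B z₀ ≠ 0) : ∃ C : ℂ, ∀ z ∉ L.lattice, A z = C * B z := by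
  refine ⟨A z₀ / B z₀, ?_⟩
  have hCB : ∀ z ∉ L.lattice, HasDerivAt (fun z => A z₀ / B z₀ * B z) (A z₀ / B z₀ * B' z) z :=
    fun z hz => (hB z hz).const_mul _
  have hev : ∀ᶠ z in 𝓝 z₀, z ∉ L.lattice ∧ B z ≠ 0 :=
    ((Om_open L).eventually_mem hz₀).and ((hB z₀ hz₀).continuousAt.eventually_ne h0)
  obtain ⟨ε, hε, hball⟩ := Metric.eventually_nhds_iff_ball.1 hev
  have hd : ∀ z ∈ Metric.ball z₀ ε, HasDerivAt (fun z => A z / B z) 0 z := by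
    intro z hz
    obtain ⟨h1, h2⟩ := hball z hz
    have := (hA z h1).div (hB z h1) h2
    rw [hW z h1, sub_self, zero_div] at this
    exact this
  have hconst : ∀ z ∈ Metric.ball z₀ ε, A z / B z = A z₀ / B z₀ := by
    intro z hz
    exact Metric.isOpen_ball.is_const_of_deriv_eq_zero (𝕜 := ℂ)
      (convex_ball z₀ ε).isPreconnected
      (fun z hz => (hd z hz).differentiableAt.differentiableWithinAt)
      (fun z hz => (hd z hz).deriv) hz (Metric.mem_ball_self hε)
  have := (Om_analytic L hA).eqOn_of_preconnected_of_eventuallyEq (Om_analytic L hCB) (Om_conn L) hz₀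
    (by
      filter_upwards [Metric.ball_mem_nhds z₀ hε] with z hz
      rw [← hconst z hz]
      field_simp [(hball z hz).2])
  exact fun z hz => this hz

lemma hasDerivAt_P (L : PeriodPair) (z : ℂ) (hz : z ∉ L.lattice) :
    HasDerivAt ℘[L] (℘'[L] z) z := by
  rw [← L.deriv_weierstrassP]
  exact (L.analyticOnNhd_weierstrassP z hz).differentiableAt.hasDerivAt

lemma exists_P'_ne (L : PeriodPair) : ∃ z ∉ L.lattice, ℘'[L] z ≠ 0 := by
  by_contra! h
  have h0 := (tendsto_cobounded_iff_meromorphicOrderAt_neg (L.meromorphic_weierstrassP 0)).2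
    (by rw [L.order_weierstrassP 0 (zero_mem _)]; decide)
  have hz1 := L.ω₁_div_two_notMem_lattice
  have hc : ∀ z ∉ L.lattice, ℘[L] z = ℘[L] (L.ω₁ / 2) := fun z hz =>
    (Om_open L).is_const_of_deriv_eq_zero (𝕜 := ℂ) (Om_conn L)
      (fun z hz => (hasDerivAt_P L z hz).differentiableAt.differentiableWithinAt)
      (fun z hz => by rw [L.deriv_weierstrassP]; exact h z hz) hz hz1
  have hev : ∀ᶠ z in 𝓝[≠] (0:ℂ), z ∉ L.lattice := by
    have := L.compl_lattice_sdiff_singleton_mem_nhds 0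
    filter_upwards [nhdsWithin_le_nhds this, self_mem_nhdsWithin] with z h1 h2 h3
    exact h1 ⟨h3, h2⟩
  have h1 : Tendsto (fun _ : ℂ => ℘[L] (L.ω₁ / 2)) (𝓝[≠] (0:ℂ)) (Bornology.cobounded ℂ) :=
    h0.congr' (hev.mono fun z hz => hc z hz)
  rw [← tendsto_norm_atTop_iff_cobounded] at h1
  exact not_tendsto_const_atTop _ _ h1

lemma hasDerivAt_P' (L : PeriodPair) (z : ℂ) (hz : z ∉ L.lattice) :
    HasDerivAt ℘'[L] (6 * ℘[L] z ^ 2 - L.g₂ / 2) z := by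
  have hd : ∀ z ∉ L.lattice, HasDerivAt ℘'[L] (deriv ℘'[L] z) z := fun z hz =>
    (L.analyticOnNhd_derivWeierstrassP z hz).differentiableAt.hasDerivAt
  have key : ∀ z ∈ (L.lattice : Set ℂ)ᶜ, ℘'[L] z * (deriv ℘'[L] z - (6 * ℘[L] z ^ 2 - L.g₂ / 2)) = 0 := by
    intro z hz
    have h1 : HasDerivAt (fun z => ℘'[L] z ^ 2) (2 * ℘'[L] z * deriv ℘'[L] z) z := by
      simpa using (hd z hz).fun_pow 2
    have h2 : HasDerivAt (fun z => 4 * ℘[L] z ^ 3 - L.g₂ * ℘[L] z - L.g₃)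
        (4 * (3 * ℘[L] z ^ 2 * ℘'[L] z) - L.g₂ * ℘'[L] z) z := by
      have hP := hasDerivAt_P L z hz
      simpa using (((hP.fun_pow 3).const_mul 4).sub (hP.const_mul L.g₂)).sub_const L.g₃
    have h3 : HasDerivAt (fun z => ℘'[L] z ^ 2)
        (4 * (3 * ℘[L] z ^ 2 * ℘'[L] z) - L.g₂ * ℘'[L] z) z :=
      h2.congr_of_eventuallyEq (by
        filter_upwards [(Om_open L).mem_nhds hz] with z hz
        exact L.derivWeierstrassP_sq z hz)
    linear_combination (1/2 : ℂ) * (h1.unique h3)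
  have hP := L.analyticOnNhd_weierstrassP
  have hP' := L.analyticOnNhd_derivWeierstrassP
  rcases AnalyticOnNhd.eq_zero_or_eq_zero_of_mul_eq_zero hP'
    (hP'.deriv.sub ((analyticOnNhd_const.mul (hP.pow 2)).sub analyticOnNhd_const)) key (Om_conn L) with h | h
  · obtain ⟨z, hz, hne⟩ := exists_P'_ne L
    exact absurd (h z hz) hne
  · have h1 := h z hz
    have := hd z hz
    simp only [Pi.sub_apply, Pi.pow_apply] at h1
    rwa [sub_eq_zero.1 h1] at this

lemma disc_ne (L : PeriodPair) : L.g₂ ^ 3 - 27 * L.g₃ ^ 2 ≠ 0 := by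
  intro hΔ
  obtain ⟨e, he2, he3⟩ : ∃ e : ℂ, L.g₂ = 12 * e ^ 2 ∧ L.g₃ = -8 * e ^ 3 := by
    by_cases h : L.g₂ = 0
    · refine ⟨0, by simp [h], ?_⟩
      rw [h] at hΔ
      simpa using hΔ
    · refine ⟨-3 * L.g₃ / (2 * L.g₂), ?_, ?_⟩
      · field_simp
        linear_combination 4 * hΔ
      · field_simp
        linear_combination 8 * L.g₃ * hΔ
  obtain ⟨k, hk⟩ := IsAlgClosed.exists_pow_nat_eq (3 * e) (n := 2) (by norm_num)
  have hω1 : L.ω₁ ≠ 0 := by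
    have := L.indep.ne_zero 0
    simpa using this
  have hmem : ∀ z ∉ L.lattice, ∀ l : L.lattice, z + l ∉ L.lattice := fun z hz l h =>
    hz (by simpa using L.lattice.sub_mem h l.2)
  have hsq : ∀ z ∉ L.lattice, ℘'[L] z ^ 2 = 4 * (℘[L] z - e) ^ 2 * (℘[L] z + 2 * e) := by
    intro z hz
    rw [L.derivWeierstrassP_sq z hz, he2, he3]
    ring
  have hP := hasDerivAt_P L
  have hP' := hasDerivAt_P' L
  by_cases hk0 : k = 0
  · have he0 : e = 0 := by
      rw [hk0] at hk
      simpa using hk.symm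
    obtain ⟨z₀, hz₀, hne⟩ := exists_P'_ne L
    obtain ⟨C, hC⟩ := prop_of_wronskian L (A := fun z => ℘[L] z + z * ℘'[L] z / 2)
      (A' := fun z => ℘'[L] z + (1 * ℘'[L] z + z * (6 * ℘[L] z ^ 2 - L.g₂ / 2)) / 2)
      (fun z hz => (hP z hz).add (((hasDerivAt_id z).mul (hP' z hz)).div_const 2)) hP'
      (by
        intro z hz
        have := hsq z hz
        rw [he0] at this
        rw [he2, he0]
        linear_combination (3/2 : ℂ) * this) hz₀ hne
    have h1 := hC z₀ hz₀
    have h2 := hC _ (hmem z₀ hz₀ ⟨L.ω₁, L.ω₁_mem_lattice⟩)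
    rw [L.weierstrassP_add_coe, L.derivWeierstrassP_add_coe] at h2
    simp only at h1 h2
    have : L.ω₁ * ℘'[L] z₀ = 0 := by linear_combination 2 * (h2 - h1)
    exact (mul_ne_zero hω1 hne) this
  · have hex : ∃ z ∉ L.lattice, ℘'[L] z - 2 * k * (℘[L] z - e) ≠ 0 ∧ ℘'[L] z + 2 * k * (℘[L] z - e) ≠ 0 := by
      by_contra! hcon
      have hPa := L.analyticOnNhd_weierstrassP
      have hPa' := L.analyticOnNhd_derivWeierstrassP
      have := AnalyticOnNhd.eq_zero_or_eq_zero_of_mul_eq_zero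
        (hPa'.sub ((analyticOnNhd_const (v := 2 * k)).mul (hPa.sub (analyticOnNhd_const (v := e)))))
        (hPa'.add ((analyticOnNhd_const (v := 2 * k)).mul (hPa.sub (analyticOnNhd_const (v := e)))))
        (by
          intro z hz
          by_cases h : ℘'[L] z - 2 * k * (℘[L] z - e) = 0
          · simp [h]
          · simp [hcon z hz h]) (Om_conn L)
      simp only [Pi.sub_apply, Pi.add_apply] at this
      obtain ⟨z, hz, hne⟩ := exists_P'_ne L
      have hz' : -z ∉ L.lattice := by simpa using hz
      apply hne
      rcases this with h | h
      · have h1 := h z hz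
        have h2 := h (-z) hz'
        simp only [L.weierstrassP_neg, L.derivWeierstrassP_neg] at h2
        linear_combination (1/2 : ℂ) * (h1 - h2)
      · have h1 := h z hz
        have h2 := h (-z) hz'
        simp only [L.weierstrassP_neg, L.derivWeierstrassP_neg] at h2
        linear_combination (1/2 : ℂ) * (h1 - h2)
    obtain ⟨z₀, hz₀, hA0, hB0⟩ := hex
    obtain ⟨C, hC⟩ := prop_of_wronskian L
      (A := fun z => (℘'[L] z - 2 * k * (℘[L] z - e)) * Complex.exp (-(2 * k) * z))
      (A' := fun z => ((6 * ℘[L] z ^ 2 - L.g₂ / 2) - 2 * k * ℘'[L] z) * Complex.exp (-(2 * k) * z) +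
        (℘'[L] z - 2 * k * (℘[L] z - e)) * (Complex.exp (-(2 * k) * z) * (-(2 * k) * 1)))
      (B := fun z => ℘'[L] z + 2 * k * (℘[L] z - e))
      (B' := fun z => (6 * ℘[L] z ^ 2 - L.g₂ / 2) + 2 * k * ℘'[L] z)
      (fun z hz => ((hP' z hz).sub (((hP z hz).sub_const e).const_mul (2 * k))).mul
        ((((hasDerivAt_id z).const_mul (-(2 * k))).cexp)))
      (fun z hz => (hP' z hz).add (((hP z hz).sub_const e).const_mul (2 * k)))
      (by
        intro z hz
        have h1 := hsq z hz
        rw [he2]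
        generalize Complex.exp (-(2 * k) * z) = E at *
        have e3 : e = k ^ 2 / 3 := by rw [hk]; ring
        subst e3
        linear_combination (-6 * k * E) * h1) hz₀ hB0
    have hexp : ∀ l : L.lattice, Complex.exp (-(2 * k) * l) = 1 := by
      intro l
      have h1 := hC z₀ hz₀
      have h2 := hC _ (hmem z₀ hz₀ l)
      simp only [L.weierstrassP_add_coe, L.derivWeierstrassP_add_coe] at h2
      rw [mul_add, Complex.exp_add] at h2
      have h3 : ((℘'[L] z₀ - 2 * k * (℘[L] z₀ - e)) * Complex.exp (-(2 * k) * z₀)) * (Complex.exp (-(2 * k) * l) - 1) = 0 := by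
        linear_combination h2 - h1
      have h4 := (mul_eq_zero.1 h3).resolve_left (mul_ne_zero hA0 (Complex.exp_ne_zero _))
      exact sub_eq_zero.1 h4
    obtain ⟨m, hm⟩ := Complex.exp_eq_one_iff.1 (hexp ⟨L.ω₁, L.ω₁_mem_lattice⟩)
    obtain ⟨n, hn⟩ := Complex.exp_eq_one_iff.1 (hexp ⟨L.ω₂, L.ω₂_mem_lattice⟩)
    simp only at hm hn
    have hdep : (-(2 * k)) * ((n : ℂ) * L.ω₁ - (m : ℂ) * L.ω₂) = 0 := by
      linear_combination (n : ℂ) * hm - (m : ℂ) * hn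
    have h5 : (n : ℂ) * L.ω₁ - (m : ℂ) * L.ω₂ = 0 :=
      (mul_eq_zero.1 hdep).resolve_left (by simpa using hk0)
    have h6 := LinearIndependent.pair_iff.1 L.indep (n : ℝ) (-(m : ℝ)) (by
      simp
      linear_combination h5)
    have hm0 : (m : ℝ) = 0 := by linarith [h6.2]
    have hm0' : m = 0 := by exact_mod_cast hm0
    rw [hm0'] at hm
    simp [hk0, hω1] at hm

end DiscPart

section SeriesPart
open Filter Topology PeriodPair

abbrev EE : Type := ℂ × ℂ × ℂ
abbrev II : Type := {p : ℤ × ℤ // p ≠ 0}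

noncomputable def NN (p : ℤ × ℤ) : ℝ := 1 + |(p.1 : ℝ)| + |(p.2 : ℝ)|

lemma NN_one_le (p : ℤ × ℤ) : 1 ≤ NN p := by
  have := abs_nonneg (p.1 : ℝ)
  have := abs_nonneg (p.2 : ℝ)
  unfold NN; linarith

lemma NN_pos (p : ℤ × ℤ) : 0 < NN p := lt_of_lt_of_le one_pos (NN_one_le p)

lemma summable_NN : Summable fun p : ℤ × ℤ => ((NN p)⁻¹) ^ 3 := by
  have h1 := EisensteinSeries.summable_one_div_norm_rpow (k := 3) (by norm_num)
  have h2 := (finTwoArrowEquiv ℤ).symm.summable_iff.2 h1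
  refine Summable.of_norm_bounded_eventually h2 ?_
  have : ({0} : Set (ℤ × ℤ)).Finite := Set.finite_singleton _
  filter_upwards [this.compl_mem_cofinite] with p hp
  have hpos : 0 < ‖(finTwoArrowEquiv ℤ).symm p‖ := by
    rw [norm_pos_iff]
    intro h
    apply hp
    have := congrArg (finTwoArrowEquiv ℤ) h
    rw [Equiv.apply_symm_apply] at this
    exact this
  have hle : ‖(finTwoArrowEquiv ℤ).symm p‖ ≤ NN p := by
    rw [pi_norm_le_iff_of_nonneg (NN_pos p).le]
    intro i
    have := abs_nonneg (p.1 : ℝ)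
    have := abs_nonneg (p.2 : ℝ)
    fin_cases i <;> simp [finTwoArrowEquiv, NN, Int.norm_eq_abs] <;> linarith
  simp only [Function.comp]
  rw [Real.norm_of_nonneg (by have := NN_pos p; positivity), Real.rpow_neg hpos.le]
  rw [inv_pow]
  have : (3:ℝ) = ((3:ℕ):ℝ) := by norm_num
  rw [this, Real.rpow_natCast]
  gcongr

lemma summable_NNI : Summable fun p : II => ((NN p)⁻¹) ^ 3 := summable_NN.subtype _

lemma base1 {w1 w2 : ℂ} (h : LinearIndependent ℝ ![w1, w2]) :
    ∃ c > 0, ∀ p : ℤ × ℤ, c * (|(p.1 : ℝ)| + |(p.2 : ℝ)|) ≤ ‖latPt w1 w2 p‖ := by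
  let L : PeriodPair := ⟨w1, w2, h⟩
  let e := L.basis.equivFunL
  have hb := e.toContinuousLinearMap.le_opNorm
  set M := ‖e.toContinuousLinearMap‖
  have hM : 0 ≤ M := norm_nonneg _
  refine ⟨(2 * (M + 1))⁻¹, by positivity, fun p => ?_⟩
  have h1 := hb (latPt w1 w2 p)
  have h2 : e.toContinuousLinearMap (latPt w1 w2 p) = ![(p.1 : ℝ), (p.2 : ℝ)] := by
    have h5 : L.basis.equivFun.symm ![(p.1 : ℝ), (p.2 : ℝ)] = latPt w1 w2 p := by
      rw [Module.Basis.equivFun_symm_apply]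
      simp [L, latPt]
    rw [← h5]
    exact L.basis.equivFun.apply_symm_apply _
  rw [h2] at h1
  have h3 : |(p.1 : ℝ)| ≤ ‖![(p.1 : ℝ), (p.2 : ℝ)]‖ := norm_le_pi_norm ![(p.1 : ℝ), (p.2 : ℝ)] 0
  have h4 : |(p.2 : ℝ)| ≤ ‖![(p.1 : ℝ), (p.2 : ℝ)]‖ := norm_le_pi_norm ![(p.1 : ℝ), (p.2 : ℝ)] 1
  rw [inv_mul_le_iff₀ (by positivity)]
  nlinarith [norm_nonneg (latPt w1 w2 p)]

lemma NN_finite (M : ℝ) : {p : ℤ × ℤ | NN p ≤ M}.Finite := by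
  refine ((Set.finite_Icc (-⌈M⌉) ⌈M⌉).prod (Set.finite_Icc (-⌈M⌉) ⌈M⌉)).subset ?_
  rintro ⟨m, n⟩ h
  simp only [NN, Set.mem_ofPred_eq] at h
  have hM := Int.le_ceil M
  have hm := abs_nonneg (m : ℝ)
  have hn := abs_nonneg (n : ℝ)
  have h1 : |(m : ℝ)| ≤ (⌈M⌉ : ℝ) := by linarith
  have h2 : |(n : ℝ)| ≤ (⌈M⌉ : ℝ) := by linarith
  rw [abs_le] at h1 h2
  refine ⟨⟨?_, ?_⟩, ⟨?_, ?_⟩⟩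
  · exact_mod_cast h1.1
  · exact_mod_cast h1.2
  · exact_mod_cast h2.1
  · exact_mod_cast h2.2

lemma base2 {w1 w2 z : ℂ} (h : LinearIndependent ℝ ![w1, w2]) (hz : z ∉ latticeSet w1 w2) :
    ∃ c > 0, ∀ p : ℤ × ℤ, c * NN p ≤ ‖z + latPt w1 w2 p‖ := by
  obtain ⟨c, hc, hb⟩ := base1 h
  have hne : ∀ p, 0 < ‖z + latPt w1 w2 p‖ := by
    intro p
    rw [norm_pos_iff]
    intro h0
    apply hz
    refine ⟨-p.1, -p.2, ?_⟩
    unfold latPt at h0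
    push_cast
    linear_combination h0
  have hbd : BddAbove (Set.range fun p => NN p / ‖z + latPt w1 w2 p‖) := by
    apply Filter.IsBoundedUnder.bddAbove_range_of_cofinite
    refine ⟨2 / c, ?_⟩
    rw [eventually_map]
    filter_upwards [(NN_finite (2 * (c + ‖z‖) / c)).compl_mem_cofinite] with p hp
    simp only [Set.mem_compl_iff, Set.mem_ofPred_eq, not_le] at hp
    rw [div_lt_iff₀ hc] at hp
    have h1 := hb p
    have h2 : c * NN p = c + c * (|(p.1 : ℝ)| + |(p.2 : ℝ)|) := by unfold NN; ring
    have h3 : ‖latPt w1 w2 p‖ - ‖z‖ ≤ ‖z + latPt w1 w2 p‖ := by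
      have := norm_sub_le (z + latPt w1 w2 p) z
      simp only [add_sub_cancel_left] at this
      linarith
    rw [div_le_div_iff₀ (hne p) hc]
    nlinarith
  obtain ⟨B, hB⟩ := hbd
  have hB' : ∀ p, NN p / ‖z + latPt w1 w2 p‖ ≤ B := fun p => hB ⟨p, rfl⟩
  have hBpos : 0 < B := lt_of_lt_of_le (div_pos (NN_pos 0) (hne 0)) (hB' 0)
  refine ⟨B⁻¹, by positivity, fun p => ?_⟩
  rw [inv_mul_le_iff₀ hBpos]
  exact (div_le_iff₀ (hne p)).1 (hB' p)

/-- linear form `x ↦ λ_p`. -/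
noncomputable def Lam (p : ℤ × ℤ) : EE →L[ℂ] ℂ :=
  (p.1 : ℂ) • (ContinuousLinearMap.fst ℂ ℂ ℂ).comp (ContinuousLinearMap.snd ℂ ℂ (ℂ × ℂ)) +
  (p.2 : ℂ) • (ContinuousLinearMap.snd ℂ ℂ ℂ).comp (ContinuousLinearMap.snd ℂ ℂ (ℂ × ℂ))

noncomputable def dZ : EE →L[ℂ] ℂ := ContinuousLinearMap.fst ℂ ℂ (ℂ × ℂ)

lemma Lam_apply (p : ℤ × ℤ) (x : EE) : Lam p x = latPt x.2.1 x.2.2 p := by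
  simp [Lam, latPt]

lemma dZ_apply (x : EE) : dZ x = x.1 := rfl

lemma dZ_norm : ‖dZ‖ ≤ 1 := ContinuousLinearMap.norm_fst_le _ _ _

lemma latPt_norm_le (a b : ℂ) (p : ℤ × ℤ) {V : ℝ} (ha : ‖a‖ ≤ V) (hb : ‖b‖ ≤ V) :
    ‖latPt a b p‖ ≤ V * NN p := by
  unfold latPt NN
  have hV : 0 ≤ V := (norm_nonneg _).trans ha
  calc _ ≤ ‖(p.1 : ℂ) * a‖ + ‖(p.2 : ℂ) * b‖ := norm_add_le _ _
    _ = |(p.1 : ℝ)| * ‖a‖ + |(p.2 : ℝ)| * ‖b‖ := by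
      rw [norm_mul, norm_mul, Complex.norm_intCast, Complex.norm_intCast]
    _ ≤ |(p.1 : ℝ)| * V + |(p.2 : ℝ)| * V := by gcongr
    _ ≤ _ := by nlinarith [abs_nonneg (p.1 : ℝ), abs_nonneg (p.2 : ℝ)]

lemma Lam_norm (p : ℤ × ℤ) : ‖Lam p‖ ≤ NN p := by
  refine ContinuousLinearMap.opNorm_le_bound _ (NN_pos p).le fun x => ?_
  rw [Lam_apply, mul_comm]
  exact latPt_norm_le _ _ _ ((norm_fst_le x.2).trans (norm_snd_le x))
    ((norm_snd_le x.2).trans (norm_snd_le x))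

lemma comb_norm (c1 c2 : ℂ) (p : ℤ × ℤ) : ‖c1 • dZ + c2 • Lam p‖ ≤ ‖c1‖ + ‖c2‖ * NN p := by
  calc _ ≤ ‖c1 • dZ‖ + ‖c2 • Lam p‖ := norm_add_le _ _
    _ = ‖c1‖ * ‖dZ‖ + ‖c2‖ * ‖Lam p‖ := by rw [norm_smul, norm_smul]
    _ ≤ ‖c1‖ * 1 + ‖c2‖ * NN p := by
      gcongr
      · exact dZ_norm
      · exact Lam_norm p
    _ = _ := by ring

/-- Uniform estimates on a ball. -/
structure GoodBall (x0 : EE) (ε K : ℝ) : Prop where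
  hε : 0 < ε
  hK : 0 < K
  hz : ∀ x ∈ Metric.ball x0 ε, ‖x.1‖ ≤ K
  hu0 : ∀ x ∈ Metric.ball x0 ε, ∀ p : ℤ × ℤ, x.1 + Lam p x ≠ 0
  hu : ∀ x ∈ Metric.ball x0 ε, ∀ p : ℤ × ℤ, ‖(x.1 + Lam p x)⁻¹‖ ≤ K * (NN p)⁻¹
  hv0 : ∀ x ∈ Metric.ball x0 ε, ∀ p : II, Lam p x ≠ 0
  hv : ∀ x ∈ Metric.ball x0 ε, ∀ p : II, ‖(Lam p x)⁻¹‖ ≤ K * (NN p)⁻¹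

lemma exists_goodBall {z w1 w2 : ℂ} (h : LinearIndependent ℝ ![w1, w2])
    (hz : z ∉ latticeSet w1 w2) : ∃ ε K, GoodBall (z, w1, w2) ε K := by
  obtain ⟨c1, hc1, h1⟩ := base1 h
  obtain ⟨c2, hc2, h2⟩ := base2 h hz
  set c := min (c1 / 2) c2 with hc
  have hcpos : 0 < c := by positivity
  have hN : ∀ p : II, NN p ≤ 2 * (|(p.1.1 : ℝ)| + |(p.1.2 : ℝ)|) := by
    rintro ⟨⟨m, n⟩, hp⟩
    have : 1 ≤ |m| + |n| := by
      by_contra hcon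
      apply hp
      have hm := abs_nonneg m
      have hn := abs_nonneg n
      have hm0 : |m| = 0 := by omega
      have hn0 : |n| = 0 := by omega
      simp [abs_eq_zero.1 hm0, abs_eq_zero.1 hn0]
    have : (1:ℝ) ≤ |(m:ℝ)| + |(n:ℝ)| := by exact_mod_cast this
    unfold NN
    simp only
    linarith
  set x0 : EE := (z, w1, w2)
  have hu' : ∀ x ∈ Metric.ball x0 (c / 4), ∀ p : ℤ × ℤ, c / 2 * NN p ≤ ‖x.1 + Lam p x‖ := by
    intro x hx p
    have hb : ‖x - x0‖ ≤ c / 4 := (mem_ball_iff_norm.1 hx).le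
    have e1 : x0.1 + Lam p x0 = (x.1 + Lam p x) - ((x - x0).1 + Lam p (x - x0)) := by
      rw [map_sub, Prod.fst_sub]; ring
    have h3 : ‖(x - x0).1 + Lam p (x - x0)‖ ≤ c / 2 * NN p := by
      calc _ ≤ ‖(x - x0).1‖ + ‖Lam p (x - x0)‖ := norm_add_le _ _
        _ ≤ c / 4 + NN p * (c / 4) := by
          gcongr
          · exact (norm_fst_le _).trans hb
          · exact ((Lam p).le_opNorm _).trans (mul_le_mul (Lam_norm p) hb (norm_nonneg _) (NN_pos p).le)
        _ ≤ _ := by nlinarith [NN_one_le p]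
    have h4 : c * NN p ≤ ‖x0.1 + Lam p x0‖ := by
      rw [Lam_apply]
      exact (mul_le_mul_of_nonneg_right (min_le_right _ _) (NN_pos p).le).trans (h2 p)
    rw [e1] at h4
    have := norm_sub_le (x.1 + Lam p x) ((x - x0).1 + Lam p (x - x0))
    linarith
  have hv' : ∀ x ∈ Metric.ball x0 (c / 4), ∀ p : II, c / 2 * NN p ≤ ‖Lam p x‖ := by
    intro x hx p
    have hb : ‖x - x0‖ ≤ c / 4 := (mem_ball_iff_norm.1 hx).le
    have e1 : Lam p x0 = Lam p x - Lam p (x - x0) := by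
      rw [map_sub]; ring
    have h3 : ‖Lam p (x - x0)‖ ≤ NN p * (c / 4) :=
      ((Lam p).le_opNorm _).trans (mul_le_mul (Lam_norm p) hb (norm_nonneg _) (NN_pos p).le)
    have h4 : c * NN p ≤ ‖Lam p x0‖ := by
      rw [Lam_apply]
      refine le_trans ?_ (h1 p)
      calc c * NN p ≤ c1 / 2 * NN p := mul_le_mul_of_nonneg_right (min_le_left _ _) (NN_pos p).le
        _ ≤ c1 / 2 * (2 * (|(p.1.1 : ℝ)| + |(p.1.2 : ℝ)|)) := by gcongr; exact hN p
        _ = _ := by ring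
    rw [e1] at h4
    have := norm_sub_le (Lam p x) (Lam p (x - x0))
    have := NN_pos p
    nlinarith
  have inv_bd : ∀ (p : ℤ × ℤ) (y : ℂ), c / 2 * NN p ≤ ‖y‖ →
      y ≠ 0 ∧ ‖y⁻¹‖ ≤ (2 / c + ‖z‖ + c) * (NN p)⁻¹ := by
    intro p y hy
    have hp := NN_pos p
    have hpos : 0 < c / 2 * NN p := by positivity
    refine ⟨norm_pos_iff.1 (hpos.trans_le hy), ?_⟩
    rw [norm_inv]
    calc ‖y‖⁻¹ ≤ (c / 2 * NN p)⁻¹ := inv_anti₀ hpos hy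
      _ = (2 / c) * (NN p)⁻¹ := by rw [mul_inv, inv_div]
      _ ≤ _ := by
        gcongr
        have := norm_nonneg z
        linarith
  refine ⟨c / 4, 2 / c + ‖z‖ + c, by positivity, by positivity, ?_, ?_, ?_, ?_, ?_⟩
  · intro x hx
    have hb : ‖x - x0‖ ≤ c / 4 := (mem_ball_iff_norm.1 hx).le
    have h3 : ‖x.1 - z‖ ≤ c / 4 := (norm_fst_le (x - x0)).trans hb
    have h4 : ‖x.1‖ ≤ ‖x.1 - z‖ + ‖z‖ := by
      have := norm_add_le (x.1 - z) z
      simpa using this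
    have : 0 < 2 / c := by positivity
    linarith
  · exact fun x hx p => (inv_bd p _ (hu' x hx p)).1
  · exact fun x hx p => (inv_bd p _ (hu' x hx p)).2
  · exact fun x hx p => (inv_bd p _ (hv' x hx p)).1
  · exact fun x hx p => (inv_bd p _ (hv' x hx p)).2

lemma joint_deriv {F : II → EE → ℂ} {F' : II → EE → EE →L[ℂ] ℂ} {x0 : EE} {ε C C' : ℝ}
    (hε : 0 < ε)
    (hF : ∀ p, ∀ x ∈ Metric.ball x0 ε, HasFDerivAt (F p) (F' p x) x)
    (hb : ∀ p, ∀ x ∈ Metric.ball x0 ε, ‖F' p x‖ ≤ C * ((NN p)⁻¹) ^ 3)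
    (h0 : ∀ p, ‖F p x0‖ ≤ C' * ((NN p)⁻¹) ^ 3) :
    ∃ D : EE →L[ℂ] ℂ, HasFDerivAt (fun x => ∑' p, F p x) D x0 ∧ ∀ v, D v = ∑' p, F' p x0 v := by
  have hs : Summable fun p : II => C * ((NN p)⁻¹) ^ 3 := summable_NNI.mul_left C
  have hx0 := Metric.mem_ball_self (x := x0) hε
  refine ⟨∑' p, F' p x0, ?_, ?_⟩
  · exact hasFDerivAt_tsum_of_isPreconnected hs Metric.isOpen_ball
      (convex_ball x0 ε).isPreconnected hF hb hx0 (Summable.of_norm_bounded (summable_NNI.mul_left C') h0) hx0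
  · intro v
    have hsum : Summable fun p => F' p x0 := Summable.of_norm_bounded hs fun p => hb p x0 hx0
    exact (ContinuousLinearMap.apply ℂ ℂ v).map_tsum hsum

lemma joint_deriv1 {F : II → ℂ → ℂ} {F' : II → ℂ → ℂ} {z0 : ℂ} {ε C C' : ℝ}
    (hε : 0 < ε)
    (hF : ∀ p, ∀ x ∈ Metric.ball z0 ε, HasDerivAt (F p) (F' p x) x)
    (hb : ∀ p, ∀ x ∈ Metric.ball z0 ε, ‖F' p x‖ ≤ C * ((NN p)⁻¹) ^ 3)
    (h0 : ∀ p, ‖F p z0‖ ≤ C' * ((NN p)⁻¹) ^ 3) :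
    HasDerivAt (fun x => ∑' p, F p x) (∑' p, F' p z0) z0 := by
  have hs : Summable fun p : II => C * ((NN p)⁻¹) ^ 3 := summable_NNI.mul_left C
  have hx0 := Metric.mem_ball_self (x := z0) hε
  exact hasDerivAt_tsum_of_isPreconnected hs Metric.isOpen_ball
      (convex_ball z0 ε).isPreconnected hF hb hx0
      (Summable.of_norm_bounded (summable_NNI.mul_left C') h0) hx0

end SeriesPart

section SeriesPart2
open Filter Topology PeriodPair

noncomputable def uu (p : ℤ × ℤ) (x : EE) : ℂ := (x.1 + Lam p x)⁻¹
noncomputable def vv (p : ℤ × ℤ) (x : EE) : ℂ := (Lam p x)⁻¹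

def Bd (p : ℤ × ℤ) (k : ℕ) (C : ℝ) (φ : ℂ) : Prop := ‖φ‖ ≤ C * ((NN p)⁻¹) ^ k ∧ 0 ≤ C

lemma nI_pos (p : ℤ × ℤ) : 0 < (NN p)⁻¹ := inv_pos.2 (NN_pos p)
lemma nI_le (p : ℤ × ℤ) : (NN p)⁻¹ ≤ 1 := inv_le_one_of_one_le₀ (NN_one_le p)

lemma Bd.mul {p : ℤ × ℤ} {k l : ℕ} {C D : ℝ} {φ ψ : ℂ} (h : Bd p k C φ) (h' : Bd p l D ψ) :
    Bd p (k + l) (C * D) (φ * ψ) := by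
  refine ⟨?_, mul_nonneg h.2 h'.2⟩
  rw [norm_mul, pow_add]
  have := nI_pos p
  calc _ ≤ (C * ((NN p)⁻¹) ^ k) * (D * ((NN p)⁻¹) ^ l) :=
        mul_le_mul h.1 h'.1 (norm_nonneg _) (by have := h.2; positivity)
    _ = _ := by ring

lemma Bd.add {p : ℤ × ℤ} {k : ℕ} {C D : ℝ} {φ ψ : ℂ} (h : Bd p k C φ) (h' : Bd p k D ψ) :
    Bd p k (C + D) (φ + ψ) := by
  refine ⟨?_, add_nonneg h.2 h'.2⟩
  rw [add_mul]
  exact (norm_add_le _ _).trans (add_le_add h.1 h'.1)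

lemma Bd.const (p : ℤ × ℤ) (c : ℂ) : Bd p 0 ‖c‖ c := ⟨by simp, norm_nonneg _⟩

lemma Bd.mono {p : ℤ × ℤ} {k l : ℕ} {C : ℝ} {φ : ℂ} (h : Bd p k C φ) (hl : l ≤ k) :
    Bd p l C φ := by
  refine ⟨h.1.trans ?_, h.2⟩
  exact mul_le_mul_of_nonneg_left (pow_le_pow_of_le_one (nI_pos p).le (nI_le p) hl) h.2

lemma Bd.comb {p : ℤ × ℤ} {C D : ℝ} {φ ψ : ℂ} (h : Bd p 3 C φ) (h' : Bd p 4 D ψ) :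
    ‖φ • dZ + ψ • Lam p‖ ≤ (C + D) * ((NN p)⁻¹) ^ 3 := by
  refine (comb_norm _ _ _).trans ?_
  rw [add_mul]
  refine add_le_add h.1 ?_
  have := NN_pos p
  calc _ ≤ (D * ((NN p)⁻¹) ^ 4) * NN p := mul_le_mul_of_nonneg_right h'.1 this.le
    _ = _ := by field_simp

lemma Bd.lam {p : ℤ × ℤ} {k : ℕ} {C : ℝ} {φ : ℂ} (h : Bd p (k+1) C φ) (a b : ℂ) :
    Bd p k (C * (‖a‖ + ‖b‖)) (φ * latPt a b p) := by
  have h1 : ‖latPt a b p‖ ≤ (‖a‖ + ‖b‖) * NN p :=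
    latPt_norm_le a b p (by linarith [norm_nonneg b]) (by linarith [norm_nonneg a])
  have := NN_pos p
  refine ⟨?_, mul_nonneg h.2 (by positivity)⟩
  rw [norm_mul]
  calc _ ≤ (C * ((NN p)⁻¹) ^ (k+1)) * ((‖a‖ + ‖b‖) * NN p) :=
        mul_le_mul h.1 h1 (norm_nonneg _) (by have := h.2; positivity)
    _ = _ := by rw [pow_succ]; field_simp

lemma hasF_u {p : ℤ × ℤ} {x : EE} (h : x.1 + Lam p x ≠ 0) :
    HasFDerivAt (uu p) (-(uu p x) ^ 2 • (dZ + Lam p)) x := by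
  have h1 : HasFDerivAt (fun x : EE => x.1 + Lam p x) (dZ + Lam p) x :=
    (dZ.hasFDerivAt).add (Lam p).hasFDerivAt
  have := (hasDerivAt_inv h).comp_hasFDerivAt x h1
  refine this.congr_fderiv ?_
  simp [uu]

lemma hasF_v {p : ℤ × ℤ} {x : EE} (h : Lam p x ≠ 0) :
    HasFDerivAt (vv p) (-(vv p x) ^ 2 • Lam p) x := by
  have := (hasDerivAt_inv h).comp_hasFDerivAt x (Lam p).hasFDerivAt
  refine this.congr_fderiv ?_
  simp [vv]

lemma hasF_z (x : EE) : HasFDerivAt (fun x : EE => x.1) dZ x := dZ.hasFDerivAt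

variable {x0 : EE} {ε K : ℝ}

lemma GoodBall.bz (g : GoodBall x0 ε K) {x : EE} (hx : x ∈ Metric.ball x0 ε) (p : ℤ × ℤ) :
    Bd p 0 K x.1 := ⟨by simpa using g.hz x hx, g.hK.le⟩
lemma GoodBall.bu (g : GoodBall x0 ε K) {x : EE} (hx : x ∈ Metric.ball x0 ε) (p : ℤ × ℤ) :
    Bd p 1 K (uu p x) := ⟨by rw [pow_one]; exact g.hu x hx p, g.hK.le⟩
lemma GoodBall.bv (g : GoodBall x0 ε K) {x : EE} (hx : x ∈ Metric.ball x0 ε) (p : II) :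
    Bd p 1 K (vv p x) := ⟨by rw [pow_one]; exact g.hv x hx p, g.hK.le⟩

lemma GoodBall.u_sub_v (g : GoodBall x0 ε K) {x : EE} (hx : x ∈ Metric.ball x0 ε) (p : II) :
    uu p x = vv p x + - x.1 * uu p x * vv p x := by
  have h1 := g.hu0 x hx p
  have h2 := g.hv0 x hx p
  unfold uu vv
  field_simp
  ring

lemma GoodBall.mem (g : GoodBall x0 ε K) : x0 ∈ Metric.ball x0 ε := Metric.mem_ball_self g.hε

lemma jd {F : II → EE → ℂ} {A B : II → EE → ℂ} (g : GoodBall x0 ε K)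
    (hF : ∀ p, ∀ x ∈ Metric.ball x0 ε, HasFDerivAt (F p) (A p x • dZ + B p x • Lam p) x)
    (hA : ∃ C, ∀ p : II, ∀ x ∈ Metric.ball x0 ε, Bd p 3 C (A p x))
    (hB : ∃ C, ∀ p : II, ∀ x ∈ Metric.ball x0 ε, Bd p 4 C (B p x))
    (h0 : ∃ C, ∀ p : II, ∀ x ∈ Metric.ball x0 ε, Bd p 3 C (F p x)) :
    ∃ D : EE →L[ℂ] ℂ, HasFDerivAt (fun x => ∑' p, F p x) D x0 ∧
      ∀ a v1 v2, D (a, v1, v2) = a * ∑' p, A p x0 + ∑' p, B p x0 * latPt v1 v2 p := by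
  obtain ⟨C1, hA⟩ := hA
  obtain ⟨C2, hB⟩ := hB
  obtain ⟨C3, h0⟩ := h0
  obtain ⟨D, hD, hD'⟩ := joint_deriv (F := F) (F' := fun p x => A p x • dZ + B p x • Lam p)
    (C := C1 + C2) (C' := C3) g.hε hF
    (fun p x hx => (hA p x hx).comb (hB p x hx)) (fun p => (h0 p x0 g.mem).1)
  refine ⟨D, hD, fun a v1 v2 => ?_⟩
  have e : ((a, v1, v2) : EE) = a • ((1, 0, 0) : EE) + (0, v1, v2) := by simp
  rw [e, map_add, map_smul, hD', hD']
  simp [dZ_apply, Lam_apply, latPt]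

lemma dS_zeta (g : GoodBall x0 ε K) :
    ∃ D : EE →L[ℂ] ℂ, HasFDerivAt (fun x => ∑' p : II, (uu p x - vv p x + x.1 * vv p x ^ 2)) D x0 ∧
      ∀ a v1 v2, D (a, v1, v2) = a * ∑' p : II, (vv p x0 ^ 2 - uu p x0 ^ 2) +
        ∑' p : II, (vv p x0 ^ 2 - uu p x0 ^ 2 - 2 * x0.1 * vv p x0 ^ 3) * latPt v1 v2 p := by
  refine jd (A := fun p x => vv p x ^ 2 - uu p x ^ 2)
    (B := fun p x => vv p x ^ 2 - uu p x ^ 2 - 2 * x.1 * vv p x ^ 3) g ?_ ?_ ?_ ?_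
  · intro p x hx
    have hu := hasF_u (g.hu0 x hx p)
    have hv := hasF_v (g.hv0 x hx p)
    refine ((hu.sub hv).add ((hasF_z x).mul (hv.pow 2))).congr_fderiv ?_
    refine ContinuousLinearMap.ext fun w => ?_
    simp [dZ_apply]
    ring
  · constructor
    intro p x hx
    have e : vv p x ^ 2 - uu p x ^ 2 = x.1 * (uu p x * (vv p x * (uu p x + vv p x))) := by
      linear_combination (-uu p x - vv p x) * g.u_sub_v hx p
    simp only [e]
    exact (g.bz hx p).mul ((g.bu hx p).mul ((g.bv hx p).mul ((g.bu hx p).add (g.bv hx p))))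
  · constructor
    intro p x hx
    have e : vv p x ^ 2 - uu p x ^ 2 - 2 * x.1 * vv p x ^ 3 =
        (-1) * (x.1 * (x.1 * (uu p x * (vv p x * (vv p x * (uu p x + 2 * vv p x)))))) := by
      linear_combination (-uu p x - vv p x + x.1 * uu p x * vv p x + x.1 * 2 * vv p x ^ 2) * g.u_sub_v hx p
    simp only [e]
    exact (Bd.const p (-1)).mul ((g.bz hx p).mul ((g.bz hx p).mul ((g.bu hx p).mul ((g.bv hx p).mul
      ((g.bv hx p).mul ((g.bu hx p).add ((Bd.const p 2).mul (g.bv hx p))))))))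
  · constructor
    intro p x hx
    have e : uu p x - vv p x + x.1 * vv p x ^ 2 =
        x.1 * (x.1 * (uu p x * (vv p x * vv p x))) := by
      linear_combination (1 - x.1 * vv p x) * g.u_sub_v hx p
    simp only [e]
    exact (g.bz hx p).mul ((g.bz hx p).mul ((g.bu hx p).mul ((g.bv hx p).mul (g.bv hx p))))

lemma Bd.pow {p : ℤ × ℤ} {C : ℝ} {φ : ℂ} (h : Bd p 1 C φ) : ∀ n : ℕ, Bd p n (C ^ n) (φ ^ n)
  | 0 => by simpa using Bd.const p 1
  | n + 1 => by
    rw [pow_succ, pow_succ]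
    exact (h.pow n).mul h

lemma GoodBall.bu3 (g : GoodBall x0 ε K) : ∃ C, ∀ p : II, ∀ x ∈ Metric.ball x0 ε,
    Bd p 4 C (uu p x ^ 3 - vv p x ^ 3) := by
  constructor
  intro p x hx
  have e : uu p x ^ 3 - vv p x ^ 3 =
      (-1) * (x.1 * (uu p x * (vv p x * (uu p x * uu p x + (uu p x * vv p x + vv p x * vv p x))))) := by
    linear_combination (uu p x ^ 2 + uu p x * vv p x + vv p x ^ 2) * g.u_sub_v hx p
  simp only [e]
  exact (Bd.const p (-1)).mul ((g.bz hx p).mul ((g.bu hx p).mul ((g.bv hx p).mul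
    (((g.bu hx p).mul (g.bu hx p)).add (((g.bu hx p).mul (g.bv hx p)).add
      ((g.bv hx p).mul (g.bv hx p)))))))

lemma dS_P (g : GoodBall x0 ε K) :
    ∃ D : EE →L[ℂ] ℂ, HasFDerivAt (fun x => ∑' p : II, (uu p x ^ 2 - vv p x ^ 2)) D x0 ∧
      ∀ a v1 v2, D (a, v1, v2) = a * ∑' p : II, (-2) * uu p x0 ^ 3 +
        ∑' p : II, (-2) * (uu p x0 ^ 3 - vv p x0 ^ 3) * latPt v1 v2 p := by
  refine jd (A := fun p x => (-2) * uu p x ^ 3)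
    (B := fun p x => (-2) * (uu p x ^ 3 - vv p x ^ 3)) g ?_ ?_ ?_ ?_
  · intro p x hx
    have hu := hasF_u (g.hu0 x hx p)
    have hv := hasF_v (g.hv0 x hx p)
    refine ((hu.pow 2).sub (hv.pow 2)).congr_fderiv ?_
    refine ContinuousLinearMap.ext fun w => ?_
    simp [dZ_apply]
    ring
  · constructor
    intro p x hx
    simp only [pow_succ, pow_zero, one_mul]
    exact (Bd.const p (-2)).mul (((g.bu hx p).mul (g.bu hx p)).mul (g.bu hx p))
  · obtain ⟨C, hC⟩ := g.bu3
    exact ⟨_, fun p x hx => (by simpa using (Bd.const p (-2)).mul (hC p x hx) : Bd p 4 (‖(-2:ℂ)‖ * C) _)⟩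
  · constructor
    intro p x hx
    have e : uu p x ^ 2 - vv p x ^ 2 = (-1) * (x.1 * (uu p x * (vv p x * (uu p x + vv p x)))) := by
      linear_combination (uu p x + vv p x) * g.u_sub_v hx p
    simp only [e]
    exact (Bd.const p (-1)).mul ((g.bz hx p).mul ((g.bu hx p).mul ((g.bv hx p).mul ((g.bu hx p).add (g.bv hx p)))))

lemma dS_P' (g : GoodBall x0 ε K) :
    ∃ D : EE →L[ℂ] ℂ, HasFDerivAt (fun x => ∑' p : II, (-2) * uu p x ^ 3) D x0 ∧
      ∀ a v1 v2, D (a, v1, v2) = a * ∑' p : II, 6 * uu p x0 ^ 4 +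
        ∑' p : II, 6 * uu p x0 ^ 4 * latPt v1 v2 p := by
  refine jd (A := fun p x => 6 * uu p x ^ 4) (B := fun p x => 6 * uu p x ^ 4) g ?_ ?_ ?_ ?_
  · intro p x hx
    have hu := hasF_u (g.hu0 x hx p)
    refine ((hu.pow 3).const_mul (-2)).congr_fderiv ?_
    refine ContinuousLinearMap.ext fun w => ?_
    simp [dZ_apply]
    ring
  · constructor
    intro p x hx
    exact Bd.mono ((Bd.const p 6).mul ((g.bu hx p).pow 4)) (by norm_num)
  · constructor
    intro p x hx
    simp only [pow_succ, pow_zero, one_mul]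
    exact (Bd.const p 6).mul ((((g.bu hx p).mul (g.bu hx p)).mul (g.bu hx p)).mul (g.bu hx p))
  · constructor
    intro p x hx
    simp only [pow_succ, pow_zero, one_mul]
    exact (Bd.const p (-2)).mul (((g.bu hx p).mul (g.bu hx p)).mul (g.bu hx p))

lemma dS_V (g : GoodBall x0 ε K) (n : ℕ) (hn : 3 ≤ n) :
    DifferentiableAt ℂ (fun x => ∑' p : II, vv p x ^ n) x0 := by
  have : ∃ D : EE →L[ℂ] ℂ, HasFDerivAt (fun x => ∑' p : II, vv p x ^ n) D x0 ∧
      ∀ a v1 v2, D (a, v1, v2) = a * ∑' p : II, 0 +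
        ∑' p : II, (-(n : ℂ) * vv p x0 ^ (n + 1)) * latPt v1 v2 p := by
    refine jd (A := fun p x => 0) (B := fun p x => -(n : ℂ) * vv p x ^ (n + 1)) g ?_ ?_ ?_ ?_
    · intro p x hx
      have hv := hasF_v (g.hv0 x hx p)
      refine (hv.pow n).congr_fderiv ?_
      refine ContinuousLinearMap.ext fun w => ?_
      obtain ⟨m, rfl⟩ : ∃ m, n = m + 1 := ⟨n - 1, by omega⟩
      simp [dZ_apply]
      ring
    · exact ⟨0, fun p x hx => ⟨by simp, le_rfl⟩⟩
    · constructor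
      intro p x hx
      exact Bd.mono ((Bd.const p (-(n:ℂ))).mul ((g.bv hx p).pow (n + 1))) (by omega)
    · constructor
      intro p x hx
      exact Bd.mono ((g.bv hx p).pow n) hn
  obtain ⟨D, hD, -⟩ := this
  exact hD.differentiableAt

variable {w1 w2 z : ℂ}

lemma hasD_u {p : ℤ × ℤ} (h : z + Lam p (z, w1, w2) ≠ 0) :
    HasDerivAt (fun z : ℂ => uu p (z, w1, w2)) (-(uu p (z, w1, w2)) ^ 2) z := by
  simp only [uu, Lam_apply] at *
  have := ((hasDerivAt_id z).add_const (latPt w1 w2 p)).inv h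
  refine this.congr_deriv ?_
  simp [neg_div]

lemma vv_eq (p : ℤ × ℤ) (z w1 w2 : ℂ) : vv p (z, w1, w2) = (latPt w1 w2 p)⁻¹ := by
  simp [vv, Lam_apply]

lemma uu_eq (p : ℤ × ℤ) (z w1 w2 : ℂ) : uu p (z, w1, w2) = (z + latPt w1 w2 p)⁻¹ := by
  simp [uu, Lam_apply]

lemma hasD_v (p : ℤ × ℤ) (z w1 w2 : ℂ) : HasDerivAt (fun z : ℂ => vv p (z, w1, w2)) 0 z := by
  simp only [vv_eq]
  exact hasDerivAt_const _ _

lemma ball_mem {z' : ℂ} (h : z' ∈ Metric.ball z ε) :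
    ((z', w1, w2) : EE) ∈ Metric.ball ((z, w1, w2) : EE) ε := by
  rw [Metric.mem_ball, Prod.dist_eq, dist_self, max_eq_left dist_nonneg]
  exact h

/-- the `t`-derivatives of `℘`, `℘'`, `ζ` at fixed `z`. -/
noncomputable def fS (w1 w2 v1 v2 z : ℂ) : ℂ :=
  ∑' p : II, (-2) * (uu p (z, w1, w2) ^ 3 - vv p (z, w1, w2) ^ 3) * latPt v1 v2 p
noncomputable def fS' (w1 w2 v1 v2 z : ℂ) : ℂ :=
  ∑' p : II, 6 * uu p (z, w1, w2) ^ 4 * latPt v1 v2 p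
noncomputable def hS (w1 w2 v1 v2 z : ℂ) : ℂ :=
  ∑' p : II, (vv p (z, w1, w2) ^ 2 - uu p (z, w1, w2) ^ 2 - 2 * z * vv p (z, w1, w2) ^ 3) * latPt v1 v2 p

lemma hasD_f (g : GoodBall (z, w1, w2) ε K) (v1 v2 : ℂ) :
    HasDerivAt (fS w1 w2 v1 v2) (fS' w1 w2 v1 v2 z) z := by
  obtain ⟨C, hC⟩ := g.bu3
  refine joint_deriv1 (C' := (‖(-2:ℂ)‖ * C) * (‖v1‖ + ‖v2‖))
    (C := (‖(6:ℂ)‖ * K ^ 4) * (‖v1‖ + ‖v2‖)) (ε := ε)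
    (F := fun (p : II) z => (-2) * (uu p (z, w1, w2) ^ 3 - vv p (z, w1, w2) ^ 3) * latPt v1 v2 p)
    (F' := fun (p : II) z => 6 * uu p (z, w1, w2) ^ 4 * latPt v1 v2 p)
    g.hε ?_ ?_ ?_
  · intro p x hx
    have hu := hasD_u (g.hu0 _ (ball_mem hx) p)
    have hv := hasD_v p x w1 w2
    refine ((((hu.fun_pow 3).sub (hv.fun_pow 3)).const_mul (-2)).mul_const _).congr_deriv ?_
    simp only [id]
    push_cast
    ring
  · intro p x hx
    exact (Bd.lam (k := 3) ((Bd.const p 6).mul ((g.bu (ball_mem hx) p).pow 4)) v1 v2).1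
  · intro p
    exact (Bd.lam (k := 3) ((Bd.const p (-2)).mul (hC p _ g.mem)) v1 v2).1

lemma hasD_h (g : GoodBall (z, w1, w2) ε K) (v1 v2 : ℂ) :
    HasDerivAt (hS w1 w2 v1 v2) (-fS w1 w2 v1 v2 z) z := by
  obtain ⟨C, hC⟩ := g.bu3
  have e1 : -fS w1 w2 v1 v2 z =
      ∑' p : II, 2 * (uu p (z, w1, w2) ^ 3 - vv p (z, w1, w2) ^ 3) * latPt v1 v2 p := by
    unfold fS
    rw [← tsum_neg]
    congr 1
    ext p
    ring
  rw [e1]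
  have key : ∃ C', ∀ p : II, Bd p 4 C' (vv p (z, w1, w2) ^ 2 - uu p (z, w1, w2) ^ 2 - 2 * z * vv p (z, w1, w2) ^ 3) := by
    constructor
    intro p
    have hx := g.mem
    have e : vv p (z, w1, w2) ^ 2 - uu p (z, w1, w2) ^ 2 - 2 * z * vv p (z, w1, w2) ^ 3 =
        (-1) * (z * (z * (uu p (z, w1, w2) * (vv p (z, w1, w2) * (vv p (z, w1, w2) * (uu p (z, w1, w2) + 2 * vv p (z, w1, w2))))))) := by
      linear_combination (-uu p (z, w1, w2) - vv p (z, w1, w2) + z * uu p (z, w1, w2) * vv p (z, w1, w2) + z * 2 * vv p (z, w1, w2) ^ 2) * g.u_sub_v hx p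
    simp only [e]
    exact (Bd.const p (-1)).mul ((g.bz hx p).mul ((g.bz hx p).mul ((g.bu hx p).mul ((g.bv hx p).mul
      ((g.bv hx p).mul ((g.bu hx p).add ((Bd.const p 2).mul (g.bv hx p))))))))
  obtain ⟨C', hC'⟩ := key
  refine joint_deriv1 (C' := C' * (‖v1‖ + ‖v2‖))
    (C := (‖(2:ℂ)‖ * C) * (‖v1‖ + ‖v2‖)) (ε := ε)
    (F := fun (p : II) z => (vv p (z, w1, w2) ^ 2 - uu p (z, w1, w2) ^ 2 - 2 * z * vv p (z, w1, w2) ^ 3) * latPt v1 v2 p)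
    (F' := fun (p : II) z => 2 * (uu p (z, w1, w2) ^ 3 - vv p (z, w1, w2) ^ 3) * latPt v1 v2 p)
    g.hε ?_ ?_ ?_
  · intro p x hx
    have hu := hasD_u (g.hu0 _ (ball_mem hx) p)
    have hv := hasD_v p x w1 w2
    refine ((((hv.fun_pow 2).sub (hu.fun_pow 2)).sub
      (((hasDerivAt_id x).const_mul 2).mul (hv.fun_pow 3))).mul_const _).congr_deriv ?_
    simp only [id]
    push_cast
    ring
  · intro p x hx
    exact (Bd.lam (k := 3) ((Bd.const p 2).mul (hC p _ (ball_mem hx))) v1 v2).1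
  · intro p
    exact (Bd.lam (k := 3) (hC' p) v1 v2).1

def negII : II ≃ II := (Equiv.neg (ℤ × ℤ)).subtypeEquiv (by simp)

lemma latPt_negII (a b : ℂ) (p : II) : latPt a b (negII p) = -latPt a b p := by
  simp [latPt, negII]
  ring

lemma inv_neg_arg (z l : ℂ) : (-z + -l)⁻¹ = -(z + l)⁻¹ := by
  rw [← neg_add, inv_neg]

lemma fS_neg (w1 w2 v1 v2 z : ℂ) : fS w1 w2 v1 v2 (-z) = fS w1 w2 v1 v2 z := by
  unfold fS
  rw [← negII.tsum_eq]
  congr 1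
  ext p
  simp only [uu_eq, vv_eq, latPt_negII, inv_neg_arg, inv_neg]
  ring

lemma hS_neg (w1 w2 v1 v2 z : ℂ) : hS w1 w2 v1 v2 (-z) = -hS w1 w2 v1 v2 z := by
  unfold hS
  rw [← negII.tsum_eq, ← tsum_neg]
  congr 1
  ext p
  simp only [uu_eq, vv_eq, latPt_negII, inv_neg_arg, inv_neg]
  ring

end SeriesPart2

section Ident
open Filter Topology PeriodPair

lemma tsum_ite_II (f : ℤ × ℤ → ℂ) :
    ∑' p : ℤ × ℤ, (if p = 0 then 0 else f p) = ∑' p : II, f p := by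
  refine Eq.trans ?_ (tsum_subtype {p : ℤ × ℤ | p ≠ 0} f).symm
  congr 1
  ext p
  by_cases h : p = 0 <;> simp [Set.indicator, h]

lemma lat_tsum (L : PeriodPair) (f : ℂ → ℂ) {a : ℂ} (h : HasSum (fun l : L.lattice => f l) a) :
    a = f 0 + ∑' p : II, f (latPt L.ω₁ L.ω₂ p) := by
  have e : ∀ p : ℤ × ℤ, ((L.latticeEquivProd.symm p : L.lattice) : ℂ) = latPt L.ω₁ L.ω₂ p := by
    intro p
    rw [L.latticeEquiv_symm_apply]; rfl
  have h1 : HasSum (fun p : ℤ × ℤ => f (latPt L.ω₁ L.ω₂ p)) a := by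
    have := (L.latticeEquivProd.symm.toEquiv.hasSum_iff (f := fun l : L.lattice => f l)).2 h
    refine this.congr_fun ?_
    intro p
    rw [← e p]
    rfl
  rw [← h1.tsum_eq, h1.summable.tsum_eq_add_tsum_ite 0, tsum_ite_II]
  simp [latPt]

lemma wp_eq (L : PeriodPair) (z : ℂ) : ℘[L] z = (z ^ 2)⁻¹ +
    ∑' p : II, (uu p (z, L.ω₁, L.ω₂) ^ 2 - vv p (z, L.ω₁, L.ω₂) ^ 2) := by
  rw [lat_tsum L (fun l => 1 / (z - l) ^ 2 - 1 / l ^ 2) (L.hasSum_weierstrassP z), ← negII.tsum_eq]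
  simp [uu_eq, vv_eq, latPt_negII]

lemma wp_eq' (w1 w2 z : ℂ) : wp w1 w2 z = (z ^ 2)⁻¹ +
    ∑' p : II, (uu p (z, w1, w2) ^ 2 - vv p (z, w1, w2) ^ 2) := by
  unfold wp
  rw [tsum_ite_II]
  simp [uu_eq, vv_eq]

lemma wp'_eq (L : PeriodPair) (z : ℂ) : ℘'[L] z = -2 * (z ^ 3)⁻¹ +
    ∑' p : II, (-2) * uu p (z, L.ω₁, L.ω₂) ^ 3 := by
  rw [lat_tsum L (fun l => -2 / (z - l) ^ 3) (L.hasSum_derivWeierstrassP z), ← negII.tsum_eq]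
  simp [uu_eq, latPt_negII, div_eq_mul_inv]

lemma wzeta_eq (w1 w2 z : ℂ) : wzeta w1 w2 z = z⁻¹ +
    ∑' p : II, (uu p (z, w1, w2) - vv p (z, w1, w2) + z * vv p (z, w1, w2) ^ 2) := by
  unfold wzeta
  rw [tsum_ite_II, ← negII.tsum_eq]
  simp [uu_eq, vv_eq, latPt_negII, sub_eq_add_neg, inv_neg]

lemma wzeta_neg (w1 w2 z : ℂ) : wzeta w1 w2 (-z) = -wzeta w1 w2 z := by
  rw [wzeta_eq, wzeta_eq, ← negII.tsum_eq, neg_add, ← tsum_neg, inv_neg]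
  congr 2
  ext p
  simp only [uu_eq, vv_eq, latPt_negII, inv_neg_arg, inv_neg]
  ring

lemma g2_eq' (z w1 w2 : ℂ) : g2 w1 w2 = 60 * ∑' p : II, vv p (z, w1, w2) ^ 4 := by
  unfold g2
  rw [tsum_ite_II]
  simp [vv_eq]

lemma g3_eq' (z w1 w2 : ℂ) : g3 w1 w2 = 140 * ∑' p : II, vv p (z, w1, w2) ^ 6 := by
  unfold g3
  rw [tsum_ite_II]
  simp [vv_eq]

lemma G_eq (L : PeriodPair) (n : ℕ) (hn : 2 < n) : L.G n = ∑' p : II, ((latPt L.ω₁ L.ω₂ p) ^ n)⁻¹ := by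
  rw [PeriodPair.G, ← L.latticeEquivProd.symm.toEquiv.tsum_eq,
    ← tsum_ite_II (fun p => ((latPt L.ω₁ L.ω₂ p) ^ n)⁻¹)]
  congr 1
  ext p
  have e : ((L.latticeEquivProd.symm p : L.lattice) : ℂ) = latPt L.ω₁ L.ω₂ p := by
    rw [L.latticeEquiv_symm_apply]; rfl
  change (((L.latticeEquivProd.symm p : L.lattice) : ℂ) ^ n)⁻¹ = _
  rw [e]
  by_cases h : p = 0
  · simp [h, latPt, show n ≠ 0 by omega]
  · simp [h]

lemma g2_eq (L : PeriodPair) : g2 L.ω₁ L.ω₂ = L.g₂ := by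
  unfold g2
  rw [tsum_ite_II, PeriodPair.g₂, G_eq L 4 (by norm_num)]

lemma g3_eq (L : PeriodPair) : g3 L.ω₁ L.ω₂ = L.g₃ := by
  unfold g3
  rw [tsum_ite_II, PeriodPair.g₃, G_eq L 6 (by norm_num)]

lemma mem_lat (L : PeriodPair) (z : ℂ) : z ∈ latticeSet L.ω₁ L.ω₂ ↔ z ∈ L.lattice := by
  rw [PeriodPair.mem_lattice]
  unfold latticeSet
  simp only [Set.mem_ofPred_eq]
  constructor <;> rintro ⟨m, n, h⟩ <;> exact ⟨m, n, h.symm⟩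

end Ident

section Master
open Filter Topology PeriodPair

noncomputable def wpd (w1 w2 z : ℂ) : ℂ := -2 * (z ^ 3)⁻¹ + ∑' p : II, (-2) * uu p (z, w1, w2) ^ 3

lemma wpd_eq (L : PeriodPair) (z : ℂ) : wpd L.ω₁ L.ω₂ z = ℘'[L] z := (wp'_eq L z).symm

lemma wp_L (L : PeriodPair) (z : ℂ) : wp L.ω₁ L.ω₂ z = ℘[L] z := by rw [wp_eq', wp_eq]

lemma ne_zero_of_notMem {w1 w2 z : ℂ} (hz : z ∉ latticeSet w1 w2) : z ≠ 0 := by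
  rintro rfl
  exact hz ⟨0, 0, by simp⟩

lemma good_L (L : PeriodPair) {z : ℂ} (hz : z ∉ L.lattice) :
    ∃ ε K, GoodBall (z, L.ω₁, L.ω₂) ε K :=
  exists_goodBall L.indep (fun h => hz ((mem_lat L z).1 h))

lemma zeta_deriv (L : PeriodPair) {z : ℂ} (hz : z ∉ L.lattice) :
    HasDerivAt (wzeta L.ω₁ L.ω₂) (-℘[L] z) z := by
  obtain ⟨ε, K, g⟩ := good_L L hz
  obtain ⟨D, hD, hD'⟩ := dS_zeta g
  have hz0 : z ≠ 0 := ne_zero_of_notMem (fun h => hz ((mem_lat L z).1 h))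
  have h1 : HasDerivAt (fun s : ℂ => ((s, L.ω₁, L.ω₂) : EE)) (1, 0, 0) z :=
    (hasDerivAt_id z).prodMk ((hasDerivAt_const z _).prodMk (hasDerivAt_const z _))
  have h2 := (hasDerivAt_inv hz0).add (hD.comp_hasDerivAt z h1)
  have e : wzeta L.ω₁ L.ω₂ = _ := funext (wzeta_eq L.ω₁ L.ω₂)
  rw [e]
  refine h2.congr_deriv ?_
  rw [hD', wp_eq]
  simp only [one_mul, latPt, mul_zero, add_zero, tsum_zero, neg_add]
  rw [← tsum_neg]
  simp

lemma R_eq (L : PeriodPair) {z : ℂ} (hz : z ∉ L.lattice) :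
    6 * (z ^ 4)⁻¹ + ∑' p : II, 6 * uu p (z, L.ω₁, L.ω₂) ^ 4 = 6 * ℘[L] z ^ 2 - L.g₂ / 2 := by
  obtain ⟨ε, K, g⟩ := good_L L hz
  obtain ⟨D, hD, hD'⟩ := dS_P' g
  have hz0 : z ≠ 0 := ne_zero_of_notMem (fun h => hz ((mem_lat L z).1 h))
  have h1 : HasDerivAt (fun s : ℂ => ((s, L.ω₁, L.ω₂) : EE)) (1, 0, 0) z :=
    (hasDerivAt_id z).prodMk ((hasDerivAt_const z _).prodMk (hasDerivAt_const z _))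
  have h0 : HasDerivAt (fun s : ℂ => -2 * (s ^ 3)⁻¹) (6 * (z ^ 4)⁻¹) z := by
    refine (((hasDerivAt_pow 3 z).inv (pow_ne_zero 3 hz0)).const_mul (-2)).congr_deriv ?_
    field_simp
    push_cast
    ring
  have h2 := h0.add (hD.comp_hasDerivAt z h1)
  have e : ℘'[L] = _ := funext (wp'_eq L)
  have h3 := hasDerivAt_P' L z hz
  rw [e] at h3
  rw [← h2.unique h3, hD']
  simp [latPt]

/-- algebraic form of the `t`-derivatives. -/
lemma fS_formula (L : PeriodPair) (v1 v2 α β d2 d3 : ℂ)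
    (e1 : 2 * L.g₂ * β + 3 * L.g₃ * α = d2 / 2)
    (e2 : 3 * L.g₃ * β + L.g₂ ^ 2 * α / 6 = d3 / 2)
    (hode : ∀ z ∉ L.lattice, 2 * ℘'[L] z * fS' L.ω₁ L.ω₂ v1 v2 z =
      12 * ℘[L] z ^ 2 * fS L.ω₁ L.ω₂ v1 v2 z - (d2 * ℘[L] z + L.g₂ * fS L.ω₁ L.ω₂ v1 v2 z) - d3) :
    ∀ z ∉ L.lattice,
      fS L.ω₁ L.ω₂ v1 v2 z = ℘'[L] z * (α * wzeta L.ω₁ L.ω₂ z + β * z) +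
        (2 * α * ℘[L] z ^ 2 + 2 * β * ℘[L] z - α * L.g₂ / 3) ∧
      fS' L.ω₁ L.ω₂ v1 v2 z = (6 * ℘[L] z ^ 2 - L.g₂ / 2) * (α * wzeta L.ω₁ L.ω₂ z + β * z) +
        ℘'[L] z * (3 * β + 3 * α * ℘[L] z) ∧
      hS L.ω₁ L.ω₂ v1 v2 z = -℘[L] z * (α * wzeta L.ω₁ L.ω₂ z + β * z) - α * ℘'[L] z / 2
        + β * wzeta L.ω₁ L.ω₂ z + α * L.g₂ * z / 12 := by
  set F : ℂ → ℂ := fun z => ℘'[L] z * (α * wzeta L.ω₁ L.ω₂ z + β * z) +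
        (2 * α * ℘[L] z ^ 2 + 2 * β * ℘[L] z - α * L.g₂ / 3) with hF
  set F' : ℂ → ℂ := fun z => (6 * ℘[L] z ^ 2 - L.g₂ / 2) * (α * wzeta L.ω₁ L.ω₂ z + β * z) +
        ℘'[L] z * (3 * β + 3 * α * ℘[L] z) with hF'
  set H : ℂ → ℂ := fun z => -℘[L] z * (α * wzeta L.ω₁ L.ω₂ z + β * z) - α * ℘'[L] z / 2
        + β * wzeta L.ω₁ L.ω₂ z + α * L.g₂ * z / 12 with hH
  have hP := hasDerivAt_P L
  have hP' := hasDerivAt_P' L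
  have hZ : ∀ z ∉ L.lattice, HasDerivAt (wzeta L.ω₁ L.ω₂) (-℘[L] z) z := fun z hz => zeta_deriv L hz
  have hLin : ∀ z ∉ L.lattice, HasDerivAt (fun z => α * wzeta L.ω₁ L.ω₂ z + β * z) (α * -℘[L] z + β * 1) z :=
    fun z hz => ((hZ z hz).const_mul α).add ((hasDerivAt_id z).const_mul β)
  have hdF : ∀ z ∉ L.lattice, HasDerivAt F (F' z) z := by
    intro z hz
    refine (((hP' z hz).mul (hLin z hz)).add (((((hP z hz).fun_pow 2).const_mul (2 * α)).add
      ((hP z hz).const_mul (2 * β))).sub_const (α * L.g₂ / 3))).congr_deriv ?_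
    simp only [hF']
    push_cast
    ring
  have hdH : ∀ z ∉ L.lattice, HasDerivAt H (-F z) z := by
    intro z hz
    refine (((((hP z hz).neg.mul (hLin z hz)).sub (((hP' z hz).const_mul α).div_const 2)).add
      ((hZ z hz).const_mul β)).add (((hasDerivAt_id z).const_mul (α * L.g₂)).div_const 12)).congr_deriv ?_
    simp only [hF, Pi.neg_apply]
    ring
  have hdf : ∀ z ∉ L.lattice, HasDerivAt (fS L.ω₁ L.ω₂ v1 v2) (fS' L.ω₁ L.ω₂ v1 v2 z) z := by
    intro z hz
    obtain ⟨ε, K, g⟩ := good_L L hz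
    exact hasD_f g v1 v2
  have hdh : ∀ z ∉ L.lattice, HasDerivAt (hS L.ω₁ L.ω₂ v1 v2) (-fS L.ω₁ L.ω₂ v1 v2 z) z := by
    intro z hz
    obtain ⟨ε, K, g⟩ := good_L L hz
    exact hasD_h g v1 v2
  have hneg : ∀ z ∉ L.lattice, -z ∉ L.lattice := fun z hz => by simpa using hz
  obtain ⟨z₀, hz₀, hne⟩ := exists_P'_ne L
  have hf : ∀ z ∉ L.lattice, fS L.ω₁ L.ω₂ v1 v2 z = F z := by
    obtain ⟨C, hC⟩ := prop_of_wronskian L (A := fun z => fS L.ω₁ L.ω₂ v1 v2 z - F z)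
      (A' := fun z => fS' L.ω₁ L.ω₂ v1 v2 z - F' z) (fun z hz => (hdf z hz).sub (hdF z hz)) hP'
      (by
        intro z hz
        have h1 := hode z hz
        have h2 := L.derivWeierstrassP_sq z hz
        simp only [hF, hF']
        linear_combination (1/2 : ℂ) * h1 - (3 * β + 3 * α * ℘[L] z) * h2 + ℘[L] z * e1 + e2) hz₀ hne
    have hC0 : C = 0 := by
      have h1 := hC z₀ hz₀
      have h2 := hC (-z₀) (hneg z₀ hz₀)
      simp only [hF, fS_neg, L.weierstrassP_neg, L.derivWeierstrassP_neg, wzeta_neg] at h1 h2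
      have : C * ℘'[L] z₀ = 0 := by linear_combination (1/2 : ℂ) * (h2 - h1)
      exact (mul_eq_zero.1 this).resolve_right hne
    intro z hz
    have := hC z hz
    rw [hC0, zero_mul] at this
    exact sub_eq_zero.1 this
  have hh : ∀ z ∉ L.lattice, hS L.ω₁ L.ω₂ v1 v2 z = H z := by
    have hd : ∀ z ∉ L.lattice, HasDerivAt (fun z => hS L.ω₁ L.ω₂ v1 v2 z - H z) 0 z := by
      intro z hz
      refine ((hdh z hz).sub (hdH z hz)).congr_deriv ?_
      rw [hf z hz]
      ring
    have hc : ∀ z ∉ L.lattice, hS L.ω₁ L.ω₂ v1 v2 z - H z = hS L.ω₁ L.ω₂ v1 v2 (-z) - H (-z) := fun z hz =>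
      (Om_open L).is_const_of_deriv_eq_zero (𝕜 := ℂ) (Om_conn L)
        (fun z hz => (hd z hz).differentiableAt.differentiableWithinAt)
        (fun z hz => (hd z hz).deriv) hz (hneg z hz)
    intro z hz
    have h1 := hc z hz
    simp only [hH, hS_neg, L.weierstrassP_neg, L.derivWeierstrassP_neg, wzeta_neg] at h1 ⊢
    linear_combination (1/2 : ℂ) * h1
  intro z hz
  refine ⟨hf z hz, ?_, hh z hz⟩
  refine (hdf z hz).unique ((hdF z hz).congr_of_eventuallyEq ?_)
  filter_upwards [(Om_open L).mem_nhds hz] with y hy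
  exact hf y hy

end Master

section Path
open Filter Topology PeriodPair

lemma path_raw {a w1 w2 : ℝ → ℂ} {t : ℝ} {a' v1 v2 : ℂ}
    (ha : HasDerivAt a a' t) (h1 : HasDerivAt w1 v1 t) (h2 : HasDerivAt w2 v2 t)
    (hi : LinearIndependent ℝ ![w1 t, w2 t]) (hz : a t ∉ latticeSet (w1 t) (w2 t)) :
    HasDerivAt (fun s => wp (w1 s) (w2 s) (a s))
      (a' * wpd (w1 t) (w2 t) (a t) + fS (w1 t) (w2 t) v1 v2 (a t)) t ∧
    HasDerivAt (fun s => wpd (w1 s) (w2 s) (a s))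
      (a' * (6 * wp (w1 t) (w2 t) (a t) ^ 2 - g2 (w1 t) (w2 t) / 2)
        + fS' (w1 t) (w2 t) v1 v2 (a t)) t ∧
    HasDerivAt (fun s => wzeta (w1 s) (w2 s) (a s))
      (a' * (-wp (w1 t) (w2 t) (a t)) + hS (w1 t) (w2 t) v1 v2 (a t)) t ∧
    DifferentiableAt ℝ (fun s => g2 (w1 s) (w2 s)) t ∧
    DifferentiableAt ℝ (fun s => g3 (w1 s) (w2 s)) t ∧
    (∀ᶠ s in 𝓝 t, a s ∉ latticeSet (w1 s) (w2 s)) := by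
  obtain ⟨ε, K, g⟩ := exists_goodBall hi hz
  have hz0 : a t ≠ 0 := ne_zero_of_notMem hz
  have hγ : HasDerivAt (fun s => ((a s, w1 s, w2 s) : EE)) (a', v1, v2) t :=
    ha.prodMk (h1.prodMk h2)
  let L : PeriodPair := ⟨w1 t, w2 t, hi⟩
  have hzL : a t ∉ L.lattice := fun h => hz ((mem_lat L (a t)).2 h)
  refine ⟨?_, ?_, ?_, ?_, ?_, ?_⟩
  · obtain ⟨D, hD, hD'⟩ := dS_P g
    have h3 := HasFDerivAt.comp_hasDerivAt_of_eq t (hD.restrictScalars ℝ) hγ rfl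
    have h4 := ((ha.fun_pow 2).inv (pow_ne_zero 2 hz0)).add h3
    simp only [wp_eq']
    refine h4.congr_deriv ?_
    change _ + D (a', v1, v2) = _
    rw [hD']
    unfold wpd fS
    push_cast
    field_simp
    ring
  · obtain ⟨D, hD, hD'⟩ := dS_P' g
    have h3 := HasFDerivAt.comp_hasDerivAt_of_eq t (hD.restrictScalars ℝ) hγ rfl
    have h4 := (((ha.fun_pow 3).inv (pow_ne_zero 3 hz0)).const_mul (-2)).add h3
    refine h4.congr_deriv ?_
    change _ + D (a', v1, v2) = _
    have hR := R_eq L hzL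
    have e1 : wp (w1 t) (w2 t) (a t) = ℘[L] (a t) := wp_L L (a t)
    have e2 : g2 (w1 t) (w2 t) = L.g₂ := g2_eq L
    rw [hD', e1, e2, ← hR]
    unfold fS'
    change _ = a' * (6 * (a t ^ 4)⁻¹ + ∑' p : II, 6 * uu p (a t, w1 t, w2 t) ^ 4) + _
    push_cast
    field_simp
    ring
  · obtain ⟨D, hD, hD'⟩ := dS_zeta g
    have h3 := HasFDerivAt.comp_hasDerivAt_of_eq t (hD.restrictScalars ℝ) hγ rfl
    have h4 := (ha.inv hz0).add h3
    simp only [wzeta_eq]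
    refine h4.congr_deriv ?_
    change _ + D (a', v1, v2) = _
    rw [hD', wp_eq']
    unfold hS
    have : ∑' p : II, (vv p (a t, w1 t, w2 t) ^ 2 - uu p (a t, w1 t, w2 t) ^ 2) =
        -∑' p : II, (uu p (a t, w1 t, w2 t) ^ 2 - vv p (a t, w1 t, w2 t) ^ 2) := by
      rw [← tsum_neg]
      simp
    rw [this]
    ring
  · have := (((dS_V g 4 (by norm_num)).hasFDerivAt.restrictScalars ℝ).differentiableAt.comp t
      hγ.differentiableAt).const_mul (60 : ℂ)
    refine this.congr_of_eventuallyEq (Eventually.of_forall fun s => ?_)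
    exact g2_eq' (a s) (w1 s) (w2 s)
  · have := (((dS_V g 6 (by norm_num)).hasFDerivAt.restrictScalars ℝ).differentiableAt.comp t
      hγ.differentiableAt).const_mul (140 : ℂ)
    refine this.congr_of_eventuallyEq (Eventually.of_forall fun s => ?_)
    exact g3_eq' (a s) (w1 s) (w2 s)
  · have hm : ∀ᶠ s in 𝓝 t, ((a s, w1 s, w2 s) : EE) ∈ Metric.ball ((a t, w1 t, w2 t) : EE) ε :=
      hγ.continuousAt.eventually (Metric.ball_mem_nhds _ g.hε)
    filter_upwards [hm] with s hs
    rintro ⟨m, n, hmn⟩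
    have := g.hu0 _ hs (-m, -n)
    apply this
    rw [Lam_apply]
    simp only [latPt, hmn]
    push_cast
    ring

/-- The differential system along a path. -/
lemma path_sys {a w1 w2 : ℝ → ℂ} {t : ℝ} {a' v1 v2 : ℂ}
    (ha : HasDerivAt a a' t) (h1 : HasDerivAt w1 v1 t) (h2 : HasDerivAt w2 v2 t)
    (hi : ∀ᶠ s in 𝓝 t, LinearIndependent ℝ ![w1 s, w2 s]) (hz : a t ∉ latticeSet (w1 t) (w2 t))
    {d2 d3 : ℂ} (hd2 : HasDerivAt (fun s => g2 (w1 s) (w2 s)) d2 t)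
    (hd3 : HasDerivAt (fun s => g3 (w1 s) (w2 s)) d3 t)
    {x y Z G2 G3 α β : ℂ} (hx : x = wp (w1 t) (w2 t) (a t)) (hy : y = wpd (w1 t) (w2 t) (a t))
    (hZ : Z = wzeta (w1 t) (w2 t) (a t)) (hG2 : G2 = g2 (w1 t) (w2 t)) (hG3 : G3 = g3 (w1 t) (w2 t))
    (e1 : 2 * G2 * β + 3 * G3 * α = d2 / 2) (e2 : 3 * G3 * β + G2 ^ 2 * α / 6 = d3 / 2) :
    HasDerivAt (fun s => wp (w1 s) (w2 s) (a s))
      (y * (a' + α * Z + β * a t) + (2 * α * x ^ 2 + 2 * β * x - α * G2 / 3)) t ∧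
    HasDerivAt (fun s => wpd (w1 s) (w2 s) (a s))
      ((6 * x ^ 2 - G2 / 2) * (a' + α * Z + β * a t) + y * (3 * β + 3 * α * x)) t ∧
    HasDerivAt (fun s => wzeta (w1 s) (w2 s) (a s))
      (-x * (a' + α * Z + β * a t) - α * y / 2 + β * Z + α * G2 * a t / 12) t := by
  have hit := hi.self_of_nhds
  obtain ⟨p1, p2, p3, -, -, -⟩ := path_raw ha h1 h2 hit hz
  let L : PeriodPair := ⟨w1 t, w2 t, hit⟩
  have hzL : a t ∉ L.lattice := fun h => hz ((mem_lat L (a t)).2 h)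
  have E1 : x = ℘[L] (a t) := hx.trans (wp_L L (a t))
  have E2 : y = ℘'[L] (a t) := hy.trans (wpd_eq L (a t))
  have E3 : G2 = L.g₂ := hG2.trans (g2_eq L)
  have E4 : G3 = L.g₃ := hG3.trans (g3_eq L)
  have hode : ∀ z ∉ L.lattice, 2 * ℘'[L] z * fS' L.ω₁ L.ω₂ v1 v2 z =
      12 * ℘[L] z ^ 2 * fS L.ω₁ L.ω₂ v1 v2 z - (d2 * ℘[L] z + L.g₂ * fS L.ω₁ L.ω₂ v1 v2 z) - d3 := by
    intro z hz'
    have hzl : z ∉ latticeSet (w1 t) (w2 t) := fun h => hz' ((mem_lat L z).1 h)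
    obtain ⟨q1, q2, -, -, -, q6⟩ := path_raw (a := fun _ => z) (hasDerivAt_const t z) h1 h2 hit hzl
    have hl := q2.fun_pow 2
    have hr := (((q1.fun_pow 3).const_mul 4).sub (hd2.mul q1)).sub hd3
    have heq : (fun s => wpd (w1 s) (w2 s) z ^ 2) =ᶠ[𝓝 t] (fun s => 4 * wp (w1 s) (w2 s) z ^ 3 -
        g2 (w1 s) (w2 s) * wp (w1 s) (w2 s) z - g3 (w1 s) (w2 s)) := by
      filter_upwards [hi, q6] with s hs hs'
      let M : PeriodPair := ⟨w1 s, w2 s, hs⟩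
      have hzM : z ∉ M.lattice := fun h => hs' ((mem_lat M z).2 h)
      have b1 : wp (w1 s) (w2 s) z = ℘[M] z := wp_L M z
      have b2 : wpd (w1 s) (w2 s) z = ℘'[M] z := wpd_eq M z
      have b3 : g2 (w1 s) (w2 s) = M.g₂ := g2_eq M
      have b4 : g3 (w1 s) (w2 s) = M.g₃ := g3_eq M
      rw [b1, b2, b3, b4]
      exact M.derivWeierstrassP_sq z hzM
    have hu := hl.unique (hr.congr_of_eventuallyEq heq)
    have b1 : wp (w1 t) (w2 t) z = ℘[L] z := wp_L L z
    have b2 : wpd (w1 t) (w2 t) z = ℘'[L] z := wpd_eq L z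
    have b3 : g2 (w1 t) (w2 t) = L.g₂ := g2_eq L
    rw [b1, b2, b3] at hu
    push_cast at hu
    change 2 * ℘'[L] z * fS' (w1 t) (w2 t) v1 v2 z =
      12 * ℘[L] z ^ 2 * fS (w1 t) (w2 t) v1 v2 z - (d2 * ℘[L] z + L.g₂ * fS (w1 t) (w2 t) v1 v2 z) - d3
    linear_combination hu
  rw [E3, E4] at e1 e2
  obtain ⟨f1, f2, f3⟩ := fS_formula L v1 v2 α β d2 d3 e1 e2 hode (a t) hzL
  change fS (w1 t) (w2 t) v1 v2 (a t) = _ at f1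
  change fS' (w1 t) (w2 t) v1 v2 (a t) = _ at f2
  change hS (w1 t) (w2 t) v1 v2 (a t) = _ at f3
  have E5 : wzeta L.ω₁ L.ω₂ (a t) = Z := hZ.symm
  rw [← E1, ← E2, ← E3, E5] at f1 f2 f3
  rw [← hy, f1] at p1
  rw [← hx, ← hG2, f2] at p2
  rw [← hx, f3] at p3
  exact ⟨p1.congr_deriv (by ring), p2.congr_deriv (by ring), p3.congr_deriv (by ring)⟩

end Path

section Final
open Filter Topology PeriodPair

def MemA (A : Subalgebra KK FG) (f : ℝ → ℂ) : Prop := ((f : ℝ → ℂ) : FG) ∈ A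

lemma MemA.mul {A : Subalgebra KK FG} {f g : ℝ → ℂ} (hf : MemA A f) (hg : MemA A g) :
    MemA A (fun t => f t * g t) := A.mul_mem hf hg
lemma MemA.add {A : Subalgebra KK FG} {f g : ℝ → ℂ} (hf : MemA A f) (hg : MemA A g) :
    MemA A (fun t => f t + g t) := A.add_mem hf hg
lemma MemA.sub {A : Subalgebra KK FG} {f g : ℝ → ℂ} (hf : MemA A f) (hg : MemA A g) :
    MemA A (fun t => f t - g t) := A.sub_mem hf hg
lemma MemA.neg {A : Subalgebra KK FG} {f : ℝ → ℂ} (hf : MemA A f) :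
    MemA A (fun t => -f t) := A.neg_mem hf
lemma MemA.pow {A : Subalgebra KK FG} {f : ℝ → ℂ} (hf : MemA A f) (n : ℕ) :
    MemA A (fun t => f t ^ n) := A.pow_mem hf n
lemma MemA.const (A : Subalgebra KK FG) (c : ℂ) : MemA A (fun _ => c) := by
  have h : (((fun _ => c) : ℝ → ℂ) : FG) = algebraMap KK FG (algebraMap (Polynomial ℂ) KK (Polynomial.C c)) := by
    rw [algMap_poly, polyGerm_apply]
    simp
  unfold MemA
  rw [h]
  exact A.algebraMap_mem _

lemma integral_inv {f g : ℝ → ℂ} (hf : IsIntegral KK (f : FG))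
    (h : ∀ t ∈ Set.Ioo (0:ℝ) 1, g t * f t = 1) : IsIntegral KK (g : FG) := by
  have h1 : (g : FG) * (f : FG) = 1 := by
    rw [← Germ.coe_mul, ← Germ.coe_one, Germ.coe_eq]
    exact ev_of_forall h
  letI : Invertible (f : FG) := ⟨(g : FG), h1, by rw [mul_comm]; exact h1⟩
  have := (isAlgebraic_iff_isIntegral.2 hf).invOf
  exact isAlgebraic_iff_isIntegral.1 this

end Final

/-- Assume `ω₁, ω₂ : (0,1) → ℂ` are differentiable and pointwise
`ℝ`-linearly independent, and `g₂(t), g₃(t)` are algebraic over `ℂ(t)`.  Let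
`a : (0,1) → ℂ` be differentiable, avoiding the lattice, with `t ↦ ℘(a(t),t)` algebraic
over `ℂ(t)` and `t ↦ ℘'(a(t),t)` not identically zero.  Then `t ↦ a(t)` and
`t ↦ ζ(a(t),t)` are D-finite. -/
theorem statement14 (ω₁ ω₂ : ℝ → ℂ)
    (hd1 : DifferentiableOn ℝ ω₁ (Set.Ioo 0 1))
    (hd2 : DifferentiableOn ℝ ω₂ (Set.Ioo 0 1))
    (hindep : ∀ t ∈ Set.Ioo (0 : ℝ) 1, LinearIndependent ℝ ![ω₁ t, ω₂ t])
    (hg2 : AlgebraicOverCt (fun t => g2 (ω₁ t) (ω₂ t)))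
    (hg3 : AlgebraicOverCt (fun t => g3 (ω₁ t) (ω₂ t)))
    (a : ℝ → ℂ) (hda : DifferentiableOn ℝ a (Set.Ioo 0 1))
    (haLat : ∀ t ∈ Set.Ioo (0 : ℝ) 1, a t ∉ latticeSet (ω₁ t) (ω₂ t))
    (hwpa : AlgebraicOverCt (fun t => wp (ω₁ t) (ω₂ t) (a t)))
    (hwp'a : ¬ ∀ t ∈ Set.Ioo (0 : ℝ) 1, deriv (wp (ω₁ t) (ω₂ t)) (a t) = 0) :
    DFiniteT a ∧ DFiniteT (fun t => wzeta (ω₁ t) (ω₂ t) (a t)) := by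

  have hO : ∀ t ∈ Set.Ioo (0:ℝ) 1, Set.Ioo (0:ℝ) 1 ∈ nhds t := fun t ht => isOpen_Ioo.mem_nhds ht
  have D1 : ∀ t ∈ Set.Ioo (0:ℝ) 1, HasDerivAt ω₁ (deriv ω₁ t) t := fun t ht =>
    (hd1.differentiableAt (hO t ht)).hasDerivAt
  have D2 : ∀ t ∈ Set.Ioo (0:ℝ) 1, HasDerivAt ω₂ (deriv ω₂ t) t := fun t ht =>
    (hd2.differentiableAt (hO t ht)).hasDerivAt
  have Da : ∀ t ∈ Set.Ioo (0:ℝ) 1, HasDerivAt a (deriv a t) t := fun t ht =>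
    (hda.differentiableAt (hO t ht)).hasDerivAt
  have hiev : ∀ t ∈ Set.Ioo (0:ℝ) 1, ∀ᶠ s in nhds t, LinearIndependent ℝ ![ω₁ s, ω₂ s] := fun t ht =>
    Filter.mem_of_superset (hO t ht) hindep
  obtain ⟨G2, rfl'⟩ : ∃ f : ℝ → ℂ, f = fun t => g2 (ω₁ t) (ω₂ t) := ⟨_, rfl⟩
  obtain ⟨G3, rfl3⟩ : ∃ f : ℝ → ℂ, f = fun t => g3 (ω₁ t) (ω₂ t) := ⟨_, rfl⟩
  obtain ⟨x, hx⟩ : ∃ f : ℝ → ℂ, f = fun t => wp (ω₁ t) (ω₂ t) (a t) := ⟨_, rfl⟩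
  obtain ⟨y, hy⟩ : ∃ f : ℝ → ℂ, f = fun t => wpd (ω₁ t) (ω₂ t) (a t) := ⟨_, rfl⟩
  obtain ⟨Z, hZ⟩ : ∃ f : ℝ → ℂ, f = fun t => wzeta (ω₁ t) (ω₂ t) (a t) := ⟨_, rfl⟩
  rw [← rfl'] at hg2
  rw [← rfl3] at hg3
  rw [← hx] at hwpa
  rw [← hZ]
  have raw := fun t ht => path_raw (Da t ht) (D1 t ht) (D2 t ht) (hindep t ht) (haLat t ht)
  have dG2 : ∀ t ∈ Set.Ioo (0:ℝ) 1, HasDerivAt G2 (deriv G2 t) t := fun t ht => by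
    rw [rfl']; exact (raw t ht).2.2.2.1.hasDerivAt
  have dG3 : ∀ t ∈ Set.Ioo (0:ℝ) 1, HasDerivAt G3 (deriv G3 t) t := fun t ht => by
    rw [rfl3]; exact (raw t ht).2.2.2.2.1.hasDerivAt
  have dx : ∀ t ∈ Set.Ioo (0:ℝ) 1, HasDerivAt x (deriv x t) t := fun t ht => by
    rw [hx]; exact (raw t ht).1.differentiableAt.hasDerivAt
  have dy : ∀ t ∈ Set.Ioo (0:ℝ) 1, HasDerivAt y (deriv y t) t := fun t ht => by
    rw [hy]; exact (raw t ht).2.1.differentiableAt.hasDerivAt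
  have hΔ : ∀ t ∈ Set.Ioo (0:ℝ) 1, G2 t ^ 3 - 27 * G3 t ^ 2 ≠ 0 := fun t ht => by
    have := disc_ne ⟨ω₁ t, ω₂ t, hindep t ht⟩
    rw [← g2_eq, ← g3_eq] at this
    rw [rfl', rfl3]
    exact this
  have hcurve : ∀ t ∈ Set.Ioo (0:ℝ) 1, y t ^ 2 = 4 * x t ^ 3 - G2 t * x t - G3 t := fun t ht => by
    let L : PeriodPair := ⟨ω₁ t, ω₂ t, hindep t ht⟩
    have := L.derivWeierstrassP_sq (a t) (fun h => haLat t ht ((mem_lat L (a t)).2 h))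
    rw [← g2_eq, ← g3_eq, ← wpd_eq, ← wp_L] at this
    rw [hx, hy, rfl', rfl3]
    exact this
  obtain ⟨dl, hdl⟩ : ∃ f : ℝ → ℂ, f = fun t => (G2 t ^ 3 - 27 * G3 t ^ 2)⁻¹ := ⟨_, rfl⟩
  have hdl1 : ∀ t ∈ Set.Ioo (0:ℝ) 1, dl t * (G2 t ^ 3 - 27 * G3 t ^ 2) = 1 := fun t ht => by
    rw [hdl]; exact inv_mul_cancel₀ (hΔ t ht)
  have ddl : ∀ t ∈ Set.Ioo (0:ℝ) 1, HasDerivAt dl (deriv dl t) t := fun t ht => by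
    rw [hdl]
    exact ((((dG2 t ht).fun_pow 3).sub (((dG3 t ht).fun_pow 2).const_mul 27)).inv
      (hΔ t ht)).differentiableAt.hasDerivAt
  have DDof : ∀ f : ℝ → ℂ, (∀ t ∈ Set.Ioo (0:ℝ) 1, HasDerivAt f (deriv f t) t) →
      DD (f : FG) ((deriv f : ℝ → ℂ) : FG) := fun f hf => ⟨f, deriv f, rfl, rfl, ev_of_forall hf⟩
  have iG2 := alg_integral hg2
  have iG3 := alg_integral hg3
  have ix := alg_integral hwpa
  have iy : IsIntegral KK (y : FG) := by
    refine IsIntegral.of_pow (n := 2) (by norm_num) ?_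
    have e : (y : FG) ^ 2 = ((fun t => 4 * x t ^ 3 - G2 t * x t - G3 t : ℝ → ℂ) : FG) := by
      rw [← Filter.Germ.coe_pow, Filter.Germ.coe_eq]
      exact ev_of_forall hcurve
    rw [e]
    have m2 : MemA (integralClosure KK FG) G2 := iG2
    have m3 : MemA (integralClosure KK FG) G3 := iG3
    have mx : MemA (integralClosure KK FG) x := ix
    exact (((MemA.const _ 4).mul (mx.pow 3)).sub (m2.mul mx)).sub m3
  have idl : IsIntegral KK (dl : FG) := by
    refine integral_inv (f := fun t => G2 t ^ 3 - 27 * G3 t ^ 2) ?_ hdl1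
    have m2 : MemA (integralClosure KK FG) G2 := iG2
    have m3 : MemA (integralClosure KK FG) G3 := iG3
    exact (m2.pow 3).sub ((MemA.const _ 27).mul (m3.pow 2))
  obtain ⟨S, hSdef⟩ : ∃ S : Set FG, S = {(G2 : FG), (G3 : FG), (x : FG), (y : FG), (dl : FG)} := ⟨_, rfl⟩
  have hSf : S.Finite := by rw [hSdef]; exact Set.toFinite _
  have hS : ∀ F ∈ S, IsIntegral KK F ∧ ∃ F', DD F F' := by
    intro F hF
    rw [hSdef] at hF
    rcases hF with rfl | rfl | rfl | rfl | rfl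
    · exact ⟨iG2, _, DDof _ dG2⟩
    · exact ⟨iG3, _, DDof _ dG3⟩
    · exact ⟨ix, _, DDof _ dx⟩
    · exact ⟨iy, _, DDof _ dy⟩
    · exact ⟨idl, _, DDof _ ddl⟩
  have m2 : MemA (Algebra.adjoin KK S) G2 := Algebra.subset_adjoin (by rw [hSdef]; simp)
  have m3 : MemA (Algebra.adjoin KK S) G3 := Algebra.subset_adjoin (by rw [hSdef]; simp)
  have mx : MemA (Algebra.adjoin KK S) x := Algebra.subset_adjoin (by rw [hSdef]; simp)
  have my : MemA (Algebra.adjoin KK S) y := Algebra.subset_adjoin (by rw [hSdef]; simp)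
  have md : MemA (Algebra.adjoin KK S) dl := Algebra.subset_adjoin (by rw [hSdef]; simp)
  have mder : ∀ f : ℝ → ℂ, MemA (Algebra.adjoin KK S) f →
      (∀ t ∈ Set.Ioo (0:ℝ) 1, HasDerivAt f (deriv f t) t) → MemA (Algebra.adjoin KK S) (deriv f) := by
    intro f hf hd
    obtain ⟨F', hF', hDD⟩ := adjoin_closed hS hf
    have := DD_unique hDD (DDof f hd)
    rw [this] at hF'
    exact hF'
  have m2' := mder G2 m2 dG2
  have m3' := mder G3 m3 dG3
  have mx' := mder x mx dx
  have my' := mder y my dy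
  have mc := MemA.const (Algebra.adjoin KK S)
  obtain ⟨α, hα⟩ : ∃ f : ℝ → ℂ, f = fun t => 3 * dl t * (G2 t * deriv G3 t - (3/2) * G3 t * deriv G2 t) := ⟨_, rfl⟩
  obtain ⟨β, hβ⟩ : ∃ f : ℝ → ℂ, f = fun t => 3 * dl t * ((1/12) * deriv G2 t * G2 t ^ 2 - (3/2) * G3 t * deriv G3 t) := ⟨_, rfl⟩
  have mα : MemA (Algebra.adjoin KK S) α := by
    rw [hα]
    exact ((mc 3).mul md).mul ((m2.mul m3').sub (((mc (3/2)).mul m3).mul m2'))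
  have mβ : MemA (Algebra.adjoin KK S) β := by
    rw [hβ]
    exact ((mc 3).mul md).mul ((((mc (1/12)).mul m2').mul (m2.pow 2)).sub (((mc (3/2)).mul m3).mul m3'))
  obtain ⟨Q, hQ⟩ : ∃ f : ℝ → ℂ, f = fun t => 2 * α t * x t ^ 2 + 2 * β t * x t - (1/3) * α t * G2 t := ⟨_, rfl⟩
  have mQ : MemA (Algebra.adjoin KK S) Q := by
    rw [hQ]
    exact ((((mc 2).mul mα).mul (mx.pow 2)).add (((mc 2).mul mβ).mul mx)).sub (((mc (1/3)).mul mα).mul m2)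
  obtain ⟨Qb, hQb⟩ : ∃ f : ℝ → ℂ, f = fun t => dl t * ((-12) * G2 t * x t ^ 2 + 18 * G3 t * x t + 2 * G2 t ^ 2) := ⟨_, rfl⟩
  have mQb : MemA (Algebra.adjoin KK S) Qb := by
    rw [hQb]
    exact md.mul (((((mc (-12)).mul m2).mul (mx.pow 2)).add (((mc 18).mul m3).mul mx)).add ((mc 2).mul (m2.pow 2)))
  obtain ⟨T, hT⟩ : ∃ f : ℝ → ℂ, f = fun t => 3 * β t + 3 * α t * x t := ⟨_, rfl⟩
  have mT : MemA (Algebra.adjoin KK S) T := by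
    rw [hT]
    exact ((mc 3).mul mβ).add (((mc 3).mul mα).mul mx)
  obtain ⟨Tb, hTb⟩ : ∃ f : ℝ → ℂ, f = fun t => dl t * (27 * G3 t - 18 * G2 t * x t) := ⟨_, rfl⟩
  have mTb : MemA (Algebra.adjoin KK S) Tb := by
    rw [hTb]
    exact md.mul (((mc 27).mul m3).sub (((mc 18).mul m2).mul mx))
  obtain ⟨γ, hγ⟩ : ∃ f : ℝ → ℂ, f = fun t => Tb t * y t * (deriv x t - Q t) - Qb t * (deriv y t - y t * T t) := ⟨_, rfl⟩
  have mγ : MemA (Algebra.adjoin KK S) γ := by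
    rw [hγ]
    exact ((mTb.mul my).mul (mx'.sub mQ)).sub (mQb.mul (my'.sub (my.mul mT)))
  have sys := fun t ht => path_sys (Da t ht) (D1 t ht) (D2 t ht) (hiev t ht) (haLat t ht)
    (d2 := deriv G2 t) (d3 := deriv G3 t) (x := x t) (y := y t) (Z := Z t) (G2 := G2 t) (G3 := G3 t)
    (α := α t) (β := β t) (by rw [← rfl']; exact dG2 t ht) (by rw [← rfl3]; exact dG3 t ht)
    (by rw [hx]) (by rw [hy]) (by rw [hZ]) (by rw [rfl']) (by rw [rfl3])
    (by
      simp only [hα, hβ]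
      linear_combination (deriv G2 t / 2) * hdl1 t ht)
    (by
      simp only [hα, hβ]
      linear_combination (deriv G3 t / 2) * hdl1 t ht)
  have hΓ : ∀ t ∈ Set.Ioo (0:ℝ) 1, deriv a t + α t * Z t + β t * a t = γ t := by
    intro t ht
    obtain ⟨s1, s2, -⟩ := sys t ht
    rw [← hx] at s1
    rw [← hy] at s2
    have u1 := (dx t ht).unique s1
    have u2 := (dy t ht).unique s2
    have k1 := hdl1 t ht
    have k2 := hcurve t ht
    simp only [hγ, u1, u2, hQ, hT, hQb, hTb]
    generalize deriv a t + α t * Z t + β t * a t = Γ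
    linear_combination (-Γ) * k1 - (dl t * (27 * G3 t - 18 * G2 t * x t) * Γ) * k2
  refine dfinite_system hSf hS a Z (p := (γ : FG)) (q := ((fun t => -β t : ℝ → ℂ) : FG))
    (r := ((fun t => -α t : ℝ → ℂ) : FG))
    (p' := ((fun t => -(x t * γ t) - (1/2) * α t * y t : ℝ → ℂ) : FG))
    (q' := ((fun t => (1/12) * α t * G2 t : ℝ → ℂ) : FG)) (r' := (β : FG))
    mγ mβ.neg mα.neg ((mx.mul mγ).neg.sub (((mc (1/2)).mul mα).mul my))
    (((mc (1/12)).mul mα).mul m2) mβ ?_ ?_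
  · refine ⟨a, fun t => γ t + (-β t) * a t + (-α t) * Z t, rfl, rfl, ev_of_forall fun t ht => ?_⟩
    refine (Da t ht).congr_deriv ?_
    linear_combination hΓ t ht
  · refine ⟨Z, fun t => (-(x t * γ t) - (1/2) * α t * y t) + ((1/12) * α t * G2 t) * a t + β t * Z t,
      rfl, rfl, ev_of_forall fun t ht => ?_⟩
    obtain ⟨-, -, s3⟩ := sys t ht
    rw [← hZ] at s3
    refine s3.congr_deriv ?_
    rw [hΓ t ht]
    ring

end WeierstrassElliptic
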